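/- Let F ⊆ ℝ² be a non-empty bounded set. Then dim_A π_x(F) ≥ min{dim_A F, 1} for all x ∈ ℝ² outside a set of exceptions of Hausdorff dimension at most 1. -/

import Mathlib

open Metric MeasureTheory Filter Set
open scoped ENNReal NNReal Pointwise Topology

noncomputable section

/-- The Assouad dimension of a subset of a (pseudo)metric space: the infimum of all
`α ≥ 0` for which there is `C > 0` such that for every `x ∈ E` and all scales `0 < r < R`,
the set `E ∩ B(x,R)` can be covered by at most `C (R/r)^α` sets of diameter at most `r`. -/
def assouadDim {X : Type*} [PseudoMetricSpace X] (E : Set X) : ℝ :=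
  sInf {α : ℝ | 0 ≤ α ∧ ∃ C : ℝ, 0 < C ∧ ∀ x ∈ E, ∀ r R : ℝ, 0 < r → r < R →
    ∃ 𝒰 : Finset (Set X), (E ∩ closedBall x R ⊆ ⋃ U ∈ 𝒰, U) ∧
      (∀ U ∈ 𝒰, EMetric.diam U ≤ ENNReal.ofReal r) ∧
      ((𝒰.card : ℝ) ≤ C * (R / r) ^ α)}

/-- Euclidean space `ℝⁿ`. -/
abbrev Euc (n : ℕ) := EuclideanSpace ℝ (Fin n)

/-- The radial projection with centre `t`, mapping `ℝⁿ \\ {t}` onto the unit sphere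
centred at `t`; we set `π_t(t) = t` for convenience. -/
def radialProj {n : ℕ} (t : Euc n) (x : Euc n) : Euc n :=
  haveI := Classical.propDecidable (x = t)
  if x = t then t else ‖x - t‖⁻¹ • (x - t) + t

/-! ### Averages over the classes of a labelling of a finite set -/

open Classical in
/-- The class of `ω` under the labelling `g` of the finite set `s`. -/
def labelClass {Ω γ : Type*} (s : Finset Ω) (g : Ω → γ) (ω : Ω) : Finset Ω :=
  {ω' ∈ s | g ω' = g ω}

/-- The average of `f` over the class of `ω` under the labelling `g` of `s`. -/
def classAvg {Ω γ : Type*} (s : Finset Ω) (g : Ω → γ) (f : Ω → ℝ) (ω : Ω) : ℝ :=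
  (∑ ω' ∈ labelClass s g ω, f ω') / (labelClass s g ω).card

/-- The sum of squared deviations of `f` from its class averages. -/
def classVar {Ω γ : Type*} (s : Finset Ω) (g : Ω → γ) (f : Ω → ℝ) : ℝ :=
  ∑ ω ∈ s, (f ω - classAvg s g f ω) ^ 2

section ClassAvg

variable {Ω γ δ : Type*} {s : Finset Ω} {g : Ω → γ} {g' : Ω → δ} {f φ : Ω → ℝ}

lemma mem_labelClass {ω ω' : Ω} : ω' ∈ labelClass s g ω ↔ ω' ∈ s ∧ g ω' = g ω := by
  simp [labelClass]

lemma labelClass_congr {ω ω' : Ω} (h : g ω = g ω') : labelClass s g ω = labelClass s g ω' := by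
  ext; simp [mem_labelClass, h]

lemma classAvg_congr {ω ω' : Ω} (h : g ω = g ω') : classAvg s g f ω = classAvg s g f ω' := by
  simp only [classAvg, labelClass_congr h]

lemma classAvg_eq_of_labelClass_eq {ω : Ω} (h : labelClass s g ω = labelClass s g' ω) :
    classAvg s g f ω = classAvg s g' f ω := by
  simp only [classAvg, h]

lemma labelClass_card_pos {ω : Ω} (h : ω ∈ s) : 0 < ((labelClass s g ω).card : ℝ) := by
  exact_mod_cast Finset.card_pos.mpr ⟨ω, mem_labelClass.mpr ⟨h, rfl⟩⟩

lemma sum_labelClass_comm (F : Ω → Ω → ℝ) :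
    ∑ ω ∈ s, ∑ ω' ∈ labelClass s g ω, F ω ω' = ∑ ω ∈ s, ∑ ω' ∈ labelClass s g ω, F ω' ω := by
  apply Finset.sum_comm'
  intro x y
  simp only [mem_labelClass]
  constructor
  · rintro ⟨h1, h2, h3⟩; exact ⟨⟨h1, h3.symm⟩, h2⟩
  · rintro ⟨⟨h1, h3⟩, h2⟩; exact ⟨h1, h2, h3.symm⟩

lemma sum_mul_classAvg (hφ : ∀ ω ∈ s, ∀ ω' ∈ s, g ω = g ω' → φ ω = φ ω') :
    ∑ ω ∈ s, φ ω * classAvg s g f ω = ∑ ω ∈ s, φ ω * f ω := by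
  have h1 : ∀ ω ∈ s, φ ω * classAvg s g f ω
      = ∑ ω' ∈ labelClass s g ω, φ ω * f ω' / (labelClass s g ω).card := by
    intro ω _
    rw [classAvg, ← Finset.sum_div, ← Finset.mul_sum]; ring
  rw [Finset.sum_congr rfl h1, sum_labelClass_comm]
  apply Finset.sum_congr rfl
  intro ω hω
  have h2 : ∀ ω' ∈ labelClass s g ω,
      φ ω' * f ω / (labelClass s g ω').card = φ ω * f ω / (labelClass s g ω).card := by
    intro ω' hω'
    obtain ⟨ha, hb⟩ := mem_labelClass.mp hω'
    rw [labelClass_congr hb, hφ ω' ha ω hω hb]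
  rw [Finset.sum_congr rfl h2, Finset.sum_const, nsmul_eq_mul]
  have := (labelClass_card_pos (g := g) hω).ne'
  field_simp

lemma classVar_add_sum_sq {ψ : Ω → ℝ} (hψ : ∀ ω ∈ s, ∀ ω' ∈ s, g ω = g ω' → ψ ω = ψ ω') :
    ∑ ω ∈ s, (f ω - ψ ω) ^ 2
      = classVar s g f + ∑ ω ∈ s, (classAvg s g f ω - ψ ω) ^ 2 := by
  have h := sum_mul_classAvg (s := s) (g := g) (f := f)
    (φ := fun ω => classAvg s g f ω - ψ ω)
    (fun ω h1 ω' h2 h => by simp only [classAvg_congr h, hψ ω h1 ω' h2 h])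
  have h3 : ∑ ω ∈ s, (f ω - ψ ω) ^ 2 = classVar s g f
      + ∑ ω ∈ s, (classAvg s g f ω - ψ ω) ^ 2
      + 2 * (∑ ω ∈ s, (classAvg s g f ω - ψ ω) * f ω
        - ∑ ω ∈ s, (classAvg s g f ω - ψ ω) * classAvg s g f ω) := by
    rw [classVar, ← Finset.sum_sub_distrib, Finset.mul_sum, ← Finset.sum_add_distrib,
      ← Finset.sum_add_distrib]
    exact Finset.sum_congr rfl fun ω _ => by ring
  rw [h3, h]; ring

lemma classVar_le {ψ : Ω → ℝ} (hψ : ∀ ω ∈ s, ∀ ω' ∈ s, g ω = g ω' → ψ ω = ψ ω') :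
    classVar s g f ≤ ∑ ω ∈ s, (f ω - ψ ω) ^ 2 := by
  rw [classVar_add_sum_sq hψ]
  linarith [Finset.sum_nonneg fun ω (_ : ω ∈ s) => sq_nonneg (classAvg s g f ω - ψ ω)]

lemma classVar_nonneg : 0 ≤ classVar s g f := Finset.sum_nonneg fun _ _ => sq_nonneg _

/-- Refining a labelling decreases the deviation by the squared change of the averages. -/
lemma classVar_eq_of_refines (h : ∀ ω ∈ s, ∀ ω' ∈ s, g' ω = g' ω' → g ω = g ω') :
    classVar s g f
      = classVar s g' f + ∑ ω ∈ s, (classAvg s g' f ω - classAvg s g f ω) ^ 2 :=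
  classVar_add_sum_sq fun ω h1 ω' h2 hg => classAvg_congr (h ω h1 ω' h2 hg)

lemma classAvg_mem_Icc (hf : ∀ ω ∈ s, f ω ∈ Icc (0 : ℝ) 1) {ω : Ω} (hω : ω ∈ s) :
    classAvg s g f ω ∈ Icc (0 : ℝ) 1 := by
  have hpos := labelClass_card_pos (g := g) hω
  constructor
  · exact div_nonneg (Finset.sum_nonneg fun ω' h => (hf ω' (mem_labelClass.mp h).1).1) hpos.le
  · rw [classAvg, div_le_one hpos]
    calc _ ≤ ∑ ω' ∈ labelClass s g ω, (1 : ℝ) :=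
          Finset.sum_le_sum fun ω' h => (hf ω' (mem_labelClass.mp h).1).2
      _ = _ := by simp

lemma sum_abs_classAvg_sub_le (h : ∀ ω ∈ s, ∀ ω' ∈ s, g' ω = g' ω' → g ω = g ω') :
    ∑ ω ∈ s, |classAvg s g' f ω - classAvg s g f ω|
      ≤ √(s.card * (classVar s g f - classVar s g' f)) := by
  apply Real.le_sqrt_of_sq_le
  have := sq_sum_le_card_mul_sum_sq (s := s) (f := fun ω => |classAvg s g' f ω - classAvg s g f ω|)
  simp only [sq_abs] at this
  rw [classVar_eq_of_refines h]
  simpa using this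

end ClassAvg

section Shift

variable {Ω κ : Type*} {s : Finset Ω} {B : Ω → κ} {a a' y : Ω → ℝ} {c η : ℝ}

/-- `ω` is isolated if no point with the same base label has its `a`-value
within `η` of an endpoint of the unit interval `[⌊a ω⌋, ⌊a ω⌋ + 1]`. -/
def EdgeFree (s : Finset Ω) (B : Ω → κ) (a : Ω → ℝ) (η : ℝ) (ω : Ω) : Prop :=
  ∀ ω' ∈ s, B ω' = B ω → η < |a ω' - ⌊a ω⌋| ∧ η < |a ω' - (⌊a ω⌋ + 1)|

lemma EdgeFree.floor_eq_iff (hη : 2 * |c| ≤ η) (hy : ∀ ω ∈ s, y ω ∈ Icc (0 : ℝ) 1)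
    (ha : ∀ ω ∈ s, a' ω = a ω + c * y ω) {ω : Ω} (hW : EdgeFree s B a η ω)
    {ω' : Ω} (hω' : ω' ∈ s) (hB : B ω' = B ω) :
    ⌊a' ω'⌋ = ⌊a ω⌋ ↔ ⌊a ω'⌋ = ⌊a ω⌋ := by
  have h1 : |c * y ω'| ≤ |c| := by
    rw [abs_mul, abs_of_nonneg (hy ω' hω').1]
    exact mul_le_of_le_one_right (abs_nonneg c) (hy ω' hω').2
  have h0 := abs_nonneg c
  rw [abs_le] at h1
  obtain ⟨h2, h3⟩ := hW ω' hω' hB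
  rw [lt_abs] at h2 h3
  simp only [Int.floor_eq_iff, ha ω' hω']
  constructor <;> rintro ⟨h4, h5⟩ <;> constructor <;>
    rcases h2 with h2 | h2 <;> rcases h3 with h3 | h3 <;> linarith

lemma abs_floor_mul_sub_le (v : ℕ) (t : ℝ) : |t - ⌊(2 : ℝ) ^ v * t⌋ / 2 ^ v| ≤ 1 / 2 ^ v := by
  have h : (0 : ℝ) < 2 ^ v := by positivity
  have h1 := Int.floor_le ((2 : ℝ) ^ v * t)
  have h2 := Int.lt_floor_add_one ((2 : ℝ) ^ v * t)
  have : t - ⌊(2 : ℝ) ^ v * t⌋ / 2 ^ v = (2 ^ v * t - ⌊(2 : ℝ) ^ v * t⌋) / 2 ^ v := by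
    field_simp
  rw [this, abs_div, abs_of_pos h]
  gcongr
  rw [abs_le]; constructor <;> linarith

lemma floor_eq_of_floor_mul_eq (v : ℕ) {t u : ℝ} (h : ⌊(2 : ℝ) ^ v * t⌋ = ⌊(2 : ℝ) ^ v * u⌋) :
    ⌊t⌋ = ⌊u⌋ := by
  have key : ∀ t : ℝ, ⌊t⌋ = ⌊(2 : ℝ) ^ v * t⌋ / (2 ^ v : ℕ) := by
    intro t
    rw [← Int.floor_div_natCast]
    congr 1
    push_cast
    field_simp
  rw [key t, key u, h]

/-- On a set where the labels `⌊a⌋` are well separated, testing `y` against `a` costs at most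
the change of the class averages of `y` when the labels are refined. -/
lemma abs_sum_mul_sub_classAvg_le (v : ℕ) {W : Ω → ℝ} (hy : ∀ ω ∈ s, y ω ∈ Icc (0 : ℝ) 1)
    (hW1 : ∀ ω ∈ s, W ω ∈ Icc (0 : ℝ) 1)
    (hW : ∀ ω ∈ s, ∀ ω' ∈ s, B ω = B ω' → ⌊a ω⌋ = ⌊a ω'⌋ → W ω = W ω') :
    |∑ ω ∈ s, W ω * Int.fract (a ω) * (y ω - classAvg s (fun ω => (B ω, ⌊a ω⌋)) y ω)|
      ≤ ∑ ω ∈ s, |classAvg s (fun ω => (B ω, ⌊(2 : ℝ) ^ v * a ω⌋)) y ω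
          - classAvg s (fun ω => (B ω, ⌊a ω⌋)) y ω| + s.card / 2 ^ v := by
  set A := classAvg s (fun ω => (B ω, ⌊a ω⌋)) y with hA
  set A' := classAvg s (fun ω => (B ω, ⌊(2 : ℝ) ^ v * a ω⌋)) y with hA'
  set q : Ω → ℝ := fun ω => ⌊(2 : ℝ) ^ v * a ω⌋ / 2 ^ v - ⌊a ω⌋ with hq
  have hv : (0 : ℝ) < 2 ^ v := by positivity
  have hAI : ∀ ω ∈ s, A ω ∈ Icc (0 : ℝ) 1 := fun ω hω => classAvg_mem_Icc hy hω
  have hq1 : ∀ ω, |Int.fract (a ω) - q ω| ≤ 1 / 2 ^ v := by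
    intro ω
    have := abs_floor_mul_sub_le v (a ω)
    rw [hq, Int.fract]
    convert this using 2
    ring
  have hq0 : ∀ ω, |q ω| ≤ 1 := by
    intro ω
    have h1 : (⌊(2 : ℝ) ^ v * a ω⌋ : ℝ) / 2 ^ v ≤ a ω := by
      rw [div_le_iff₀ hv]; linarith [Int.floor_le ((2 : ℝ) ^ v * a ω)]
    have h2 : (⌊a ω⌋ : ℝ) ≤ ⌊(2 : ℝ) ^ v * a ω⌋ / 2 ^ v := by
      rw [le_div_iff₀ hv]
      have : ((⌊a ω⌋ * 2 ^ v : ℤ) : ℝ) ≤ ⌊(2 : ℝ) ^ v * a ω⌋ := by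
        apply Int.cast_le.mpr
        rw [Int.le_floor]
        push_cast
        nlinarith [Int.floor_le (a ω)]
      push_cast at this
      exact this
    have h3 := Int.lt_floor_add_one (a ω)
    rw [hq, abs_le]
    constructor <;> linarith
  have hmeas : ∀ ω ∈ s, ∀ ω' ∈ s, (fun ω => (B ω, ⌊(2 : ℝ) ^ v * a ω⌋)) ω
      = (fun ω => (B ω, ⌊(2 : ℝ) ^ v * a ω⌋)) ω' → W ω * q ω = W ω' * q ω' := by
    intro ω h1 ω' h2 h
    simp only [Prod.mk.injEq] at h
    have hf := floor_eq_of_floor_mul_eq v h.2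
    simp only [hq, hW ω h1 ω' h2 h.1 hf, hf, h.2]
  have key := sum_mul_classAvg (f := y) hmeas
  have e1 : ∑ ω ∈ s, W ω * Int.fract (a ω) * (y ω - A ω)
      = ∑ ω ∈ s, W ω * q ω * (A' ω - A ω)
        + ∑ ω ∈ s, W ω * (Int.fract (a ω) - q ω) * (y ω - A ω) := by
    have : ∑ ω ∈ s, W ω * q ω * (A' ω - A ω) = ∑ ω ∈ s, W ω * q ω * (y ω - A ω) := by
      simp only [mul_sub, Finset.sum_sub_distrib]
      rw [← key]
    rw [this, ← Finset.sum_add_distrib]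
    exact Finset.sum_congr rfl fun ω _ => by ring
  rw [e1]
  refine (abs_add_le _ _).trans (add_le_add ?_ ?_)
  · refine (Finset.abs_sum_le_sum_abs _ _).trans (Finset.sum_le_sum fun ω hω => ?_)
    rw [abs_mul, abs_mul, abs_of_nonneg (hW1 ω hω).1]
    have : W ω * |q ω| ≤ 1 := mul_le_one₀ (hW1 ω hω).2 (abs_nonneg _) (hq0 ω)
    exact mul_le_of_le_one_left (abs_nonneg _) this
  · refine (Finset.abs_sum_le_sum_abs _ _).trans ?_
    have : ∀ ω ∈ s, |W ω * (Int.fract (a ω) - q ω) * (y ω - A ω)| ≤ 1 / 2 ^ v := by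
      intro ω hω
      rw [abs_mul, abs_mul, abs_of_nonneg (hW1 ω hω).1]
      have h1 : |y ω - A ω| ≤ 1 := by
        have := hy ω hω; have := hAI ω hω
        rw [abs_le]; constructor <;> linarith [(hy ω hω).1, (hy ω hω).2, (hAI ω hω).1, (hAI ω hω).2]
      calc W ω * |Int.fract (a ω) - q ω| * |y ω - A ω|
          ≤ 1 * (1 / 2 ^ v) * 1 := by
            gcongr
            · exact (hW1 ω hω).2
            · exact hq1 ω
        _ = 1 / 2 ^ v := by ring
    refine (Finset.sum_le_sum this).trans ?_
    simp [div_eq_mul_inv]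

open Classical in
/-- If refining the labels `⌊a⌋` and `⌊a + c y⌋` both leave the class averages of `y` almost
unchanged, then `y` is almost constant on the classes. -/
lemma abs_mul_classVar_sub_le (v : ℕ) (hη : 2 * |c| ≤ η) (hy : ∀ ω ∈ s, y ω ∈ Icc (0 : ℝ) 1)
    (ha : ∀ ω ∈ s, a' ω = a ω + c * y ω) :
    |c| * (classVar s (fun ω => (B ω, ⌊a ω⌋)) y
        - ({ω ∈ s | ¬ EdgeFree s B a η ω} : Finset Ω).card)
      ≤ ∑ ω ∈ s, |classAvg s (fun ω => (B ω, ⌊(2 : ℝ) ^ v * a ω⌋)) y ω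
            - classAvg s (fun ω => (B ω, ⌊a ω⌋)) y ω|
        + ∑ ω ∈ s, |classAvg s (fun ω => (B ω, ⌊(2 : ℝ) ^ v * a' ω⌋)) y ω
            - classAvg s (fun ω => (B ω, ⌊a' ω⌋)) y ω|
        + 2 * (s.card / 2 ^ v) := by
  set A := classAvg s (fun ω => (B ω, ⌊a ω⌋)) y with hA
  set A' := classAvg s (fun ω => (B ω, ⌊a' ω⌋)) y with hA'
  set W : Ω → ℝ := fun ω => if EdgeFree s B a η ω then 1 else 0 with hWdef
  have hW1 : ∀ ω ∈ s, W ω ∈ Icc (0 : ℝ) 1 := by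
    intro ω _; simp only [hWdef]; split_ifs <;> simp
  have hfl : ∀ ω ∈ s, EdgeFree s B a η ω → ⌊a' ω⌋ = ⌊a ω⌋ := fun ω hω h =>
    (h.floor_eq_iff hη hy ha hω rfl).mpr rfl
  have hEF : ∀ ω ω', B ω = B ω' → ⌊a ω⌋ = ⌊a ω'⌋ → EdgeFree s B a η ω → EdgeFree s B a η ω' := by
    intro ω ω' h1 h2 h ω'' h3 h4
    rw [← h2]; exact h ω'' h3 (h4.trans h1.symm)
  have hEF' : ∀ ω ∈ s, ∀ ω' ∈ s, B ω = B ω' → ⌊a' ω⌋ = ⌊a' ω'⌋ →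
      EdgeFree s B a η ω → EdgeFree s B a η ω' := by
    intro ω h1 ω' h2 h3 h4 h
    refine hEF ω ω' h3 ?_ h
    refine ((h.floor_eq_iff hη hy ha h2 h3.symm).mp ?_).symm
    rw [← h4, hfl ω h1 h]
  have hWm : ∀ ω ∈ s, ∀ ω' ∈ s, B ω = B ω' → ⌊a ω⌋ = ⌊a ω'⌋ → W ω = W ω' := by
    intro ω _ ω' _ h1 h2
    have : EdgeFree s B a η ω ↔ EdgeFree s B a η ω' :=
      ⟨hEF ω ω' h1 h2, hEF ω' ω h1.symm h2.symm⟩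
    simp only [hWdef, this]
  have hWm' : ∀ ω ∈ s, ∀ ω' ∈ s, B ω = B ω' → ⌊a' ω⌋ = ⌊a' ω'⌋ → W ω = W ω' := by
    intro ω h3 ω' h4 h1 h2
    have : EdgeFree s B a η ω ↔ EdgeFree s B a η ω' :=
      ⟨hEF' ω h3 ω' h4 h1 h2, hEF' ω' h4 ω h3 h1.symm h2.symm⟩
    simp only [hWdef, this]
  have hAA : ∀ ω ∈ s, EdgeFree s B a η ω → A' ω = A ω := by
    intro ω hω h
    apply classAvg_eq_of_labelClass_eq
    ext ω'
    simp only [mem_labelClass, Prod.mk.injEq]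
    refine and_congr_right fun h1 => and_congr_right fun h2 => ?_
    rw [hfl ω hω h]
    exact h.floor_eq_iff hη hy ha h1 h2
  have b1 := abs_sum_mul_sub_classAvg_le v hy hW1 hWm
  have b2 := abs_sum_mul_sub_classAvg_le v hy hW1 hWm'
  have m1 : ∑ ω ∈ s, W ω * A ω * A ω = ∑ ω ∈ s, W ω * A ω * y ω := by
    apply sum_mul_classAvg (g := fun ω => (B ω, ⌊a ω⌋)) (φ := fun ω => W ω * A ω)
    intro ω h1 ω' h2 h
    have h' := h
    simp only [Prod.mk.injEq] at h'
    have h3 : A ω = A ω' := classAvg_congr (g := fun ω => (B ω, ⌊a ω⌋)) h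
    simp only [hWm ω h1 ω' h2 h'.1 h'.2, h3]
  have e1 : c * ∑ ω ∈ s, W ω * (y ω - A ω) ^ 2
      = ∑ ω ∈ s, W ω * Int.fract (a' ω) * (y ω - A' ω)
        - ∑ ω ∈ s, W ω * Int.fract (a ω) * (y ω - A ω) := by
    have : ∑ ω ∈ s, W ω * (y ω - A ω) ^ 2 = ∑ ω ∈ s, W ω * (y ω * (y ω - A ω)) := by
      have h2 : ∀ ω, W ω * (y ω - A ω) ^ 2
          = W ω * (y ω * (y ω - A ω)) + (W ω * A ω * A ω - W ω * A ω * y ω) := fun ω => by ring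
      simp only [h2, Finset.sum_add_distrib, Finset.sum_sub_distrib, m1]; ring
    rw [this, ← Finset.sum_sub_distrib, Finset.mul_sum]
    apply Finset.sum_congr rfl
    intro ω hω
    by_cases h : EdgeFree s B a η ω
    · rw [hAA ω hω h, Int.fract, Int.fract, hfl ω hω h, ha ω hω]; ring
    · simp [hWdef, h]
  have e2 : classVar s (fun ω => (B ω, ⌊a ω⌋)) y
      - ({ω ∈ s | ¬ EdgeFree s B a η ω} : Finset Ω).card ≤ ∑ ω ∈ s, W ω * (y ω - A ω) ^ 2 := by
    rw [classVar, Finset.card_filter, sub_le_iff_le_add]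
    push_cast
    rw [← Finset.sum_add_distrib]
    apply Finset.sum_le_sum
    intro ω hω
    by_cases h : EdgeFree s B a η ω
    · simp [hWdef, h, hA]
    · have h1 := classAvg_mem_Icc (g := fun ω => (B ω, ⌊a ω⌋)) hy hω
      have h2 := hy ω hω
      simp only [hWdef, h, if_false, not_false_eq_true, if_true, zero_mul, zero_add]
      rw [sq_le_one_iff_abs_le_one, abs_le]
      constructor <;> linarith [h1.1, h1.2, h2.1, h2.2]
  have e3 : 0 ≤ ∑ ω ∈ s, W ω * (y ω - A ω) ^ 2 :=
    Finset.sum_nonneg fun ω hω => mul_nonneg (hW1 ω hω).1 (sq_nonneg _)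
  calc _ ≤ |c| * ∑ ω ∈ s, W ω * (y ω - A ω) ^ 2 := by gcongr
    _ = |c * ∑ ω ∈ s, W ω * (y ω - A ω) ^ 2| := by rw [abs_mul, abs_of_nonneg e3]
    _ ≤ _ := by
      rw [e1]
      refine (abs_sub _ _).trans ?_
      linarith

open Classical in
/-- Changing labels on a small set changes the deviation only slightly. -/
lemma classVar_le_add_card {Ω γ : Type*} {s : Finset Ω} {g g' : Ω → γ} {y : Ω → ℝ}
    (hy : ∀ ω ∈ s, y ω ∈ Icc (0 : ℝ) 1) :
    classVar s g' y ≤ classVar s g y + ({ω ∈ s | g' ω ≠ g ω} : Finset Ω).card := by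
  set ψ : Ω → ℝ := fun ω => if h : ∃ ω' ∈ s, g ω' = g' ω then
    classAvg s g y h.choose else 0 with hψ
  have hψm : ∀ ω ∈ s, ∀ ω' ∈ s, g' ω = g' ω' → ψ ω = ψ ω' := by
    intro ω _ ω' _ h
    simp only [hψ, h]
  refine (classVar_le hψm).trans ?_
  rw [classVar, Finset.card_filter]
  push_cast
  rw [← Finset.sum_add_distrib]
  apply Finset.sum_le_sum
  intro ω hω
  by_cases h : g' ω = g ω
  · have hex : ∃ ω' ∈ s, g ω' = g' ω := ⟨ω, hω, h.symm⟩
    have : ψ ω = classAvg s g y ω := by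
      simp only [hψ, dif_pos hex]
      exact classAvg_congr (hex.choose_spec.2.trans h)
    simp [h, this]
  · have h1 : ψ ω ∈ Icc (0 : ℝ) 1 := by
      simp only [hψ]
      split_ifs with hex
      · exact classAvg_mem_Icc hy hex.choose_spec.1
      · simp
    have h2 := hy ω hω
    simp only [ne_eq, h, not_false_eq_true, if_true]
    have : (y ω - ψ ω) ^ 2 ≤ 1 := by
      rw [sq_le_one_iff_abs_le_one, abs_le]
      constructor <;> linarith [h1.1, h1.2, h2.1, h2.2]
    linarith [sq_nonneg (y ω - classAvg s g y ω)]

end Shift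

/-! ### Counting lattice points -/

lemma card_int_le {T : Finset ℤ} {x D : ℝ} (hD : 0 ≤ D) (h : ∀ j ∈ T, |(j : ℝ) - x| ≤ D) :
    (T.card : ℝ) ≤ 2 * D + 1 := by
  have hsub : T ⊆ Finset.Icc ⌈x - D⌉ ⌊x + D⌋ := by
    intro j hj
    have := abs_le.mp (h j hj)
    rw [Finset.mem_Icc, Int.ceil_le, Int.le_floor]
    constructor <;> linarith
  have h1 : (T.card : ℝ) ≤ ((⌊x + D⌋ + 1 - ⌈x - D⌉).toNat : ℝ) := by
    exact_mod_cast (Finset.card_le_card hsub).trans (Int.card_Icc _ _).le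
  have h2 : ((⌊x + D⌋ + 1 - ⌈x - D⌉).toNat : ℝ) = (max (⌊x + D⌋ + 1 - ⌈x - D⌉) 0 : ℤ) := by
    rw [← Int.toNat_eq_max, Int.cast_natCast]
  rw [h2] at h1
  refine h1.trans ?_
  push_cast
  apply max_le
  · linarith [Int.floor_le (x + D), Int.le_ceil (x - D)]
  · linarith

lemma card_nat_le {T : Finset ℕ} {x D : ℝ} (hD : 0 ≤ D) (h : ∀ j ∈ T, |(j : ℝ) - x| ≤ D) :
    (T.card : ℝ) ≤ 2 * D + 1 := by
  rw [← Finset.card_map (Nat.castEmbedding (R := ℤ)) (s := T)]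
  apply card_int_le hD (x := x)
  intro j hj
  obtain ⟨k, hk, rfl⟩ := Finset.mem_map.mp hj
  simpa using h k hk

open Classical in
/-- The number of dyadic shifts bringing a given point `δ`-close to an integer. -/
lemma card_near_int_le (n l : ℕ) (t : ℝ) {δ : ℝ} (hδ : 0 ≤ δ) :
    (({j ∈ Finset.range (2 ^ n) | ∃ m : ℤ, |t + 2 ^ l * ((j : ℝ) / 2 ^ n) - m| ≤ δ} :
      Finset ℕ).card : ℝ) ≤ 2 ^ n * (3 * (2 * δ + 2 ^ l / 2 ^ n)) := by
  set J := ({j ∈ Finset.range (2 ^ n) | ∃ m : ℤ, |t + 2 ^ l * ((j : ℝ) / 2 ^ n) - m| ≤ δ} :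
      Finset ℕ) with hJ
  have hn : (0 : ℝ) < 2 ^ n := by positivity
  have hl0 : (1 : ℝ) ≤ 2 ^ l := one_le_pow₀ (by norm_num)
  have hln : (0 : ℝ) < 2 ^ l / 2 ^ n := by positivity
  rcases le_or_gt (1 / 2) δ with h | h
  · have : (J.card : ℝ) ≤ 2 ^ n := by
      have : J.card ≤ 2 ^ n := by
        rw [← Finset.card_range (2 ^ n)]
        exact Finset.card_filter_le _ _
      exact_mod_cast this
    refine this.trans (le_mul_of_one_le_right hn.le ?_)
    linarith
  · set M : Finset ℤ := Finset.Icc ⌈t - δ⌉ ⌊t + 2 ^ l + δ⌋ with hM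
    have hMc : (M.card : ℝ) ≤ 3 * 2 ^ l := by
      have : (M.card : ℝ) ≤ 2 * (2 ^ l / 2 + δ) + 1 := by
        apply card_int_le (x := t + 2 ^ l / 2) (by positivity)
        intro j hj
        rw [hM, Finset.mem_Icc, Int.ceil_le, Int.le_floor] at hj
        rw [abs_le]
        constructor <;> linarith [hj.1, hj.2]
      linarith
    set G : ℤ → Finset ℕ := fun m =>
        {j ∈ Finset.range (2 ^ n) | |t + 2 ^ l * ((j : ℝ) / 2 ^ n) - m| ≤ δ} with hG
    have hsub : J ⊆ M.biUnion G := by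
      intro j hj
      rw [hJ, Finset.mem_filter] at hj
      obtain ⟨h1, m, hm⟩ := hj
      rw [Finset.mem_biUnion]
      refine ⟨m, ?_, Finset.mem_filter.mpr ⟨h1, hm⟩⟩
      rw [hM, Finset.mem_Icc, Int.ceil_le, Int.le_floor]
      have h2 : (j : ℝ) / 2 ^ n ≤ 1 := by
        rw [div_le_one hn]
        exact_mod_cast (Finset.mem_range.mp h1).le
      have h3 : (0 : ℝ) ≤ (j : ℝ) / 2 ^ n := by positivity
      have h4 := abs_le.mp hm
      constructor <;> nlinarith
    have hfib : ∀ m ∈ M, ((G m).card : ℝ)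
          ≤ 2 * (δ * (2 ^ n / 2 ^ l)) + 1 := by
      intro m _
      apply card_nat_le (x := (m - t) * (2 ^ n / 2 ^ l)) (by positivity)
      intro j hj
      have hj := (Finset.mem_filter.mp hj).2
      have : (j : ℝ) - (m - t) * (2 ^ n / 2 ^ l)
          = (t + 2 ^ l * ((j : ℝ) / 2 ^ n) - m) * (2 ^ n / 2 ^ l) := by
        field_simp; ring
      rw [this, abs_mul, abs_of_pos (by positivity : (0 : ℝ) < 2 ^ n / 2 ^ l)]
      gcongr
    calc (J.card : ℝ) ≤ ((M.biUnion G).card : ℝ) := by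
          exact_mod_cast Finset.card_le_card hsub
      _ ≤ ∑ m ∈ M, ((G m).card : ℝ) := by
          exact_mod_cast Finset.card_biUnion_le
      _ ≤ ∑ m ∈ M, (2 * (δ * (2 ^ n / 2 ^ l)) + 1) := Finset.sum_le_sum hfib
      _ = M.card * (2 * (δ * (2 ^ n / 2 ^ l)) + 1) := by rw [Finset.sum_const, nsmul_eq_mul]
      _ ≤ 3 * 2 ^ l * (2 * (δ * (2 ^ n / 2 ^ l)) + 1) := by gcongr
      _ = _ := by field_simp

/-! ### The random rescaling of a planar set -/

/-- Triples `(p, i, j)`: a point of `P`, a scale `b ^ (-i)` and a horizontal shift `j / 2 ^ n`. -/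
def scaleSpace (P : Finset (ℝ × ℝ)) (n : ℕ) : Finset ((ℝ × ℝ) × ℕ × ℕ) :=
  P ×ˢ (Finset.range n ×ˢ Finset.range (2 ^ n))

/-- The second coordinate of the rescaled point, modulo one. -/
def scaleFract (b : ℕ) (ω : (ℝ × ℝ) × ℕ × ℕ) : ℝ := Int.fract ((b : ℝ) ^ ω.2.1 * ω.1.2)

/-- The scale, the shift and the horizontal strip containing the rescaled point. -/
def scaleLabel (b : ℕ) (ω : (ℝ × ℝ) × ℕ × ℕ) : ℕ × ℕ × ℤ :=
  (ω.2.1, ω.2.2, ⌊(b : ℝ) ^ ω.2.1 * ω.1.2⌋)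

/-- The shifted projection, in direction `e`, of the rescaled point in its strip, in units
of `2 ^ (-l)`. -/
def scaleProj (b n : ℕ) (e : ℝ) (l : ℕ) (ω : (ℝ × ℝ) × ℕ × ℕ) : ℝ :=
  2 ^ l * ((b : ℝ) ^ ω.2.1 * ω.1.1 + e * scaleFract b ω + (ω.2.2 : ℝ) / 2 ^ n)

/-- The mean conditional variance of the second coordinate given the projection at
resolution `2 ^ (-l)`. -/
def condVar (b n : ℕ) (P : Finset (ℝ × ℝ)) (e : ℝ) (l : ℕ) : ℝ :=
  classVar (scaleSpace P n) (fun ω => (scaleLabel b ω, ⌊scaleProj b n e l ω⌋)) (scaleFract b)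
    / (scaleSpace P n).card

/-- The projection of `P` in direction `e` has at most `C (ρ / ρ') ^ s` pieces of size `ρ'` in
each interval of size `ρ`, for all scales above `b ^ (-n)`. -/
def ProjHomogeneous (b n : ℕ) (P : Finset (ℝ × ℝ)) (C s e : ℝ) : Prop :=
  ∀ t ρ ρ' : ℝ, ((b : ℝ) ^ n)⁻¹ ≤ ρ' → ρ' ≤ ρ → ∃ S : Finset ℝ,
    (∀ p ∈ P, |p.1 + e * p.2 - t| ≤ ρ → ∃ q ∈ S, |p.1 + e * p.2 - q| ≤ ρ') ∧
    (S.card : ℝ) ≤ C * (ρ / ρ') ^ s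

section CondVar

variable {b n : ℕ} {P : Finset (ℝ × ℝ)} {C s e e' : ℝ} {l : ℕ}

lemma scaleFract_mem (ω : (ℝ × ℝ) × ℕ × ℕ) : scaleFract b ω ∈ Icc (0 : ℝ) 1 :=
  ⟨Int.fract_nonneg _, (Int.fract_lt_one _).le⟩

lemma card_scaleSpace : ((scaleSpace P n).card : ℝ) = P.card * (n * 2 ^ n) := by
  simp [scaleSpace]

lemma scaleProj_add (l v : ℕ) (ω : (ℝ × ℝ) × ℕ × ℕ) :
    scaleProj b n e (l + v) ω = 2 ^ v * scaleProj b n e l ω := by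
  simp only [scaleProj, pow_add]; ring

lemma scaleProj_change (e e' : ℝ) (l : ℕ) (ω : (ℝ × ℝ) × ℕ × ℕ) :
    scaleProj b n e' l ω = scaleProj b n e l ω + 2 ^ l * (e' - e) * scaleFract b ω := by
  simp only [scaleProj]; ring

lemma scaleProj_eq (e : ℝ) (l : ℕ) (p : ℝ × ℝ) (i j : ℕ) :
    scaleProj b n e l (p, i, j) = 2 ^ l * ((b : ℝ) ^ i * (p.1 + e * p.2)
      - e * ⌊(b : ℝ) ^ i * p.2⌋) + 2 ^ l * ((j : ℝ) / 2 ^ n) := by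
  simp only [scaleProj, scaleFract, Int.fract]; ring

lemma condVar_nonneg : 0 ≤ condVar b n P e l := div_nonneg classVar_nonneg (by positivity)

lemma condVar_le_one : condVar b n P e l ≤ 1 := by
  apply div_le_one_of_le₀ _ (by positivity)
  refine (classVar_le (ψ := fun _ => 0) (by simp)).trans ?_
  calc _ ≤ ∑ ω ∈ scaleSpace P n, (1 : ℝ) := by
        apply Finset.sum_le_sum
        intro ω _
        have := scaleFract_mem (b := b) ω
        rw [sub_zero]
        exact pow_le_one₀ this.1 this.2
    _ = _ := by simp

lemma scaleLabel_refine (v : ℕ) (ω ω' : (ℝ × ℝ) × ℕ × ℕ)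
    (h : (scaleLabel b ω, ⌊scaleProj b n e (l + v) ω⌋)
      = (scaleLabel b ω', ⌊scaleProj b n e (l + v) ω'⌋)) :
    (scaleLabel b ω, ⌊scaleProj b n e l ω⌋) = (scaleLabel b ω', ⌊scaleProj b n e l ω'⌋) := by
  simp only [Prod.mk.injEq, scaleProj_add] at h ⊢
  exact ⟨h.1, floor_eq_of_floor_mul_eq v h.2⟩

lemma condVar_antitone (v : ℕ) : condVar b n P e (l + v) ≤ condVar b n P e l := by
  unfold condVar
  gcongr
  rw [classVar_eq_of_refines (fun ω _ ω' _ h => scaleLabel_refine (l := l) v ω ω' h)]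
  linarith [Finset.sum_nonneg fun ω (_ : ω ∈ scaleSpace P n) => sq_nonneg
    (classAvg (scaleSpace P n) (fun ω => (scaleLabel b ω, ⌊scaleProj b n e (l + v) ω⌋))
      (scaleFract b) ω
      - classAvg (scaleSpace P n) (fun ω => (scaleLabel b ω, ⌊scaleProj b n e l ω⌋))
      (scaleFract b) ω)]

lemma card_filter_scaleSpace_le {Q : (ℝ × ℝ) × ℕ × ℕ → Prop} {_ : DecidablePred Q} (K : ℕ) {M : ℝ} (hM : 0 ≤ M)
    (h : ∀ p ∈ P, ∀ i, i + K ≤ n →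
      (({j ∈ Finset.range (2 ^ n) | Q (p, i, j)} : Finset ℕ).card : ℝ) ≤ 2 ^ n * M) :
    (({ω ∈ scaleSpace P n | Q ω} : Finset _).card : ℝ) / (scaleSpace P n).card
      ≤ M + K / n := by
  rcases (Nat.zero_le (scaleSpace P n).card).eq_or_lt with h0 | h0
  · rw [← h0]; simp; positivity
  rw [div_le_iff₀ (by exact_mod_cast h0), card_scaleSpace]
  have hn : 0 < n := by
    rcases Nat.eq_zero_or_pos n with rfl | h
    · simp [scaleSpace] at h0
    · exact h
  have h1 : (({ω ∈ scaleSpace P n | Q ω} : Finset _).card : ℝ)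
      = ∑ p ∈ P, ∑ i ∈ Finset.range n,
        (({j ∈ Finset.range (2 ^ n) | Q (p, i, j)} : Finset ℕ).card : ℝ) := by
    simp only [Finset.card_filter, scaleSpace, Finset.sum_product]
    push_cast; rfl
  rw [h1]
  have h2 : ∀ p ∈ P, ∑ i ∈ Finset.range n,
      (({j ∈ Finset.range (2 ^ n) | Q (p, i, j)} : Finset ℕ).card : ℝ)
        ≤ n * 2 ^ n * M + K * 2 ^ n := by
    intro p hp
    have h3 : ∀ i ∈ Finset.range n,
        (({j ∈ Finset.range (2 ^ n) | Q (p, i, j)} : Finset ℕ).card : ℝ)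
          ≤ 2 ^ n * M + if n < i + K then (2 : ℝ) ^ n else 0 := by
      intro i _
      split_ifs with hi
      · have := Finset.card_filter_le (Finset.range (2 ^ n)) (fun j => Q (p, i, j))
        rw [Finset.card_range] at this
        have : (({j ∈ Finset.range (2 ^ n) | Q (p, i, j)} : Finset ℕ).card : ℝ) ≤ 2 ^ n := by
          exact_mod_cast this
        have : 0 ≤ 2 ^ n * M := by positivity
        linarith
      · linarith [h p hp i (not_lt.mp hi)]
    refine (Finset.sum_le_sum h3).trans ?_
    rw [Finset.sum_add_distrib, ← Finset.sum_filter]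
    simp only [Finset.sum_const, Finset.card_range, nsmul_eq_mul]
    have h4 : (({i ∈ Finset.range n | n < i + K} : Finset ℕ).card : ℝ) ≤ K := by
      have : ({i ∈ Finset.range n | n < i + K} : Finset ℕ) ⊆ Finset.Ico (n - K) n := by
        intro i hi
        simp at hi ⊢
        omega
      have h5 := Finset.card_le_card this
      rw [Nat.card_Ico] at h5
      exact_mod_cast h5.trans (by omega)
    have : (({i ∈ Finset.range n | n < i + K} : Finset ℕ).card : ℝ) * 2 ^ n ≤ K * 2 ^ n := by
      gcongr
    linarith
  refine (Finset.sum_le_sum h2).trans (le_of_eq ?_)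
  rw [Finset.sum_const, nsmul_eq_mul]
  have : (n : ℝ) ≠ 0 := by positivity
  field_simp

lemma exists_int_near_of_floor_ne {u v : ℝ} (h : ⌊u⌋ ≠ ⌊v⌋) : ∃ m : ℤ, |v - m| ≤ |u - v| := by
  rcases lt_or_gt_of_ne h with h | h
  · refine ⟨⌊v⌋, ?_⟩
    have h1 := Int.floor_le v
    have h2 := Int.floor_lt.mp h
    rw [abs_of_nonneg (by linarith), abs_sub_comm, abs_of_nonneg (by linarith)]
    linarith
  · refine ⟨⌊u⌋, ?_⟩
    have h1 := Int.floor_le u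
    have h2 := Int.floor_lt.mp h
    rw [abs_sub_comm, abs_of_nonneg (by linarith), abs_of_nonneg (by linarith)]
    linarith

lemma condVar_le_add (e e' : ℝ) :
    condVar b n P e' l ≤ condVar b n P e l + 3 * (2 * (2 ^ l * |e' - e|) + 2 ^ l / 2 ^ n) := by
  classical
  unfold condVar
  have h1 := classVar_le_add_card (s := scaleSpace P n) (y := scaleFract b)
    (g := fun ω => (scaleLabel b ω, ⌊scaleProj b n e l ω⌋))
    (g' := fun ω => (scaleLabel b ω, ⌊scaleProj b n e' l ω⌋)) (fun ω _ => scaleFract_mem ω)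
  refine (div_le_div_of_nonneg_right h1 (by positivity)).trans ?_
  rw [add_div]
  refine add_le_add le_rfl ((card_filter_scaleSpace_le 0
    (M := 3 * (2 * (2 ^ l * |e' - e|) + 2 ^ l / 2 ^ n)) (by positivity) ?_).trans_eq (by simp))
  · intro p _ i _
    refine le_trans ?_ (card_near_int_le n l (2 ^ l * ((b : ℝ) ^ i * (p.1 + e * p.2)
      - e * ⌊(b : ℝ) ^ i * p.2⌋)) (by positivity : (0 : ℝ) ≤ 2 ^ l * |e' - e|))
    norm_cast
    apply Finset.card_le_card
    intro j hj
    simp only [Finset.mem_filter, Prod.mk.injEq, true_and] at hj ⊢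
    refine ⟨hj.1, ?_⟩
    obtain ⟨m, hm⟩ := exists_int_near_of_floor_ne hj.2
    refine ⟨m, ?_⟩
    rw [scaleProj_change e e', scaleProj_eq, add_sub_cancel_left] at hm
    push_cast
    refine hm.trans ?_
    rw [abs_mul, abs_mul, abs_of_nonneg (scaleFract_mem _).1, abs_of_pos (by positivity)]
    exact mul_le_of_le_one_right (by positivity) (scaleFract_mem _).2

open Classical in
lemma card_not_edgeFree_le (hb : 2 ≤ b) (hP : ProjHomogeneous b n P C s e)
    {L w : ℕ} (hw : 1 ≤ w) (hC : 0 ≤ C) :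
    (({ω ∈ scaleSpace P n | ¬ EdgeFree (scaleSpace P n) (scaleLabel b) (scaleProj b n e L)
      (2 / 2 ^ w) ω} : Finset _).card : ℝ) / (scaleSpace P n).card
      ≤ C * (2 * 2 ^ w) ^ s * (3 * (2 * (3 / 2 ^ w) + 2 ^ L / 2 ^ n)) + ((L + w : ℕ) : ℝ) / n := by
  refine card_filter_scaleSpace_le (L + w)
    (M := C * (2 * 2 ^ w) ^ s * (3 * (2 * (3 / 2 ^ w) + 2 ^ L / 2 ^ n))) (by positivity) ?_
  intro p hp i hi
  have hb0 : (0 : ℝ) < b := by positivity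
  have hbi : (0 : ℝ) < (b : ℝ) ^ i := by positivity
  have hb2 : (2 : ℝ) ≤ b := by exact_mod_cast hb
  have hρ : ((b : ℝ) ^ n)⁻¹ ≤ (2 ^ w * 2 ^ L * (b : ℝ) ^ i)⁻¹ := by
    apply inv_anti₀ (by positivity)
    calc (2 : ℝ) ^ w * 2 ^ L * (b : ℝ) ^ i ≤ (b : ℝ) ^ w * (b : ℝ) ^ L * (b : ℝ) ^ i := by gcongr
      _ = (b : ℝ) ^ (i + (L + w)) := by ring
      _ ≤ _ := pow_le_pow_right₀ (by linarith) hi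
  have hρ2 : (2 ^ w * 2 ^ L * (b : ℝ) ^ i)⁻¹ ≤ 2 * (2 ^ L * (b : ℝ) ^ i)⁻¹ := by
    rw [mul_assoc, mul_inv]
    gcongr
    exact (inv_le_one_of_one_le₀ (one_le_pow₀ (by norm_num))).trans (by norm_num)
  obtain ⟨S, hS, hSc⟩ := hP (p.1 + e * p.2) _ _ hρ hρ2
  have hratio : 2 * (2 ^ L * (b : ℝ) ^ i)⁻¹ / (2 ^ w * 2 ^ L * (b : ℝ) ^ i)⁻¹ = 2 * 2 ^ w := by
    field_simp
  rw [hratio] at hSc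
  set T : ℝ → Finset ℕ := fun q => {j ∈ Finset.range (2 ^ n) | ∃ m : ℤ,
    |2 ^ L * ((b : ℝ) ^ i * q - e * ⌊(b : ℝ) ^ i * p.2⌋) + 2 ^ L * ((j : ℝ) / 2 ^ n) - m|
      ≤ 3 / 2 ^ w} with hT
  have hsub : ({j ∈ Finset.range (2 ^ n) | ¬ EdgeFree (scaleSpace P n) (scaleLabel b)
      (scaleProj b n e L) (2 / 2 ^ w) (p, i, j)} : Finset ℕ) ⊆ S.biUnion T := by
    intro j hj
    rw [Finset.mem_filter] at hj
    obtain ⟨hj1, hj2⟩ := hj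
    simp only [EdgeFree, not_forall, not_and_or, not_lt] at hj2
    obtain ⟨⟨p', i', j'⟩, hω', hB, hor⟩ := hj2
    simp only [scaleLabel, Prod.mk.injEq] at hB
    obtain ⟨rfl, rfl, hY⟩ := hB
    have hp' : p' ∈ P := (Finset.mem_product.mp hω').1
    have h2w : (2 : ℝ) / 2 ^ w ≤ 1 := by
      rw [div_le_one (by positivity)]
      calc (2 : ℝ) = 2 ^ 1 := by norm_num
        _ ≤ 2 ^ w := pow_le_pow_right₀ (by norm_num) hw
    have hnear : ∃ m : ℤ, |scaleProj b n e L (p', i', j') - m| ≤ 2 / 2 ^ w ∧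
        |scaleProj b n e L (p', i', j') - scaleProj b n e L (p, i', j')| ≤ 2 := by
      have f1 := Int.floor_le (scaleProj b n e L (p, i', j'))
      have f2 := Int.lt_floor_add_one (scaleProj b n e L (p, i', j'))
      rcases hor with h | h
      · refine ⟨_, h, ?_⟩
        rw [abs_le] at h ⊢
        constructor <;> linarith [h.1, h.2]
      · refine ⟨⌊scaleProj b n e L (p, i', j')⌋ + 1, by exact_mod_cast h, ?_⟩
        rw [abs_le] at h ⊢
        constructor <;> linarith [h.1, h.2]
    obtain ⟨m, hm, hd⟩ := hnear
    have hd' : |p'.1 + e * p'.2 - (p.1 + e * p.2)| ≤ 2 * (2 ^ L * (b : ℝ) ^ i')⁻¹ := by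
      have : scaleProj b n e L (p', i', j') - scaleProj b n e L (p, i', j')
          = 2 ^ L * (b : ℝ) ^ i' * (p'.1 + e * p'.2 - (p.1 + e * p.2)) := by
        rw [scaleProj_eq, scaleProj_eq, hY]; ring
      rw [this, abs_mul, abs_of_pos (by positivity)] at hd
      rw [← div_eq_mul_inv, le_div_iff₀ (by positivity)]
      linarith
    obtain ⟨q, hq, hqd⟩ := hS p' hp' hd'
    rw [Finset.mem_biUnion]
    refine ⟨q, hq, ?_⟩
    rw [hT, Finset.mem_filter]
    refine ⟨hj1, m, ?_⟩
    have e1 : 2 ^ L * ((b : ℝ) ^ i' * q - e * ⌊(b : ℝ) ^ i' * p.2⌋) + 2 ^ L * ((j' : ℝ) / 2 ^ n) - m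
        = (scaleProj b n e L (p', i', j') - m)
          - 2 ^ L * (b : ℝ) ^ i' * (p'.1 + e * p'.2 - q) := by
      rw [scaleProj_eq, hY]; ring
    have e2 : |2 ^ L * (b : ℝ) ^ i' * (p'.1 + e * p'.2 - q)| ≤ 1 / 2 ^ w := by
      rw [abs_mul, abs_of_pos (by positivity)]
      calc 2 ^ L * (b : ℝ) ^ i' * |p'.1 + e * p'.2 - q|
          ≤ 2 ^ L * (b : ℝ) ^ i' * (2 ^ w * 2 ^ L * (b : ℝ) ^ i')⁻¹ := by gcongr
        _ = 1 / 2 ^ w := by field_simp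
    rw [e1]
    refine (abs_sub _ _).trans ?_
    calc _ ≤ 2 / 2 ^ w + 1 / (2 : ℝ) ^ w := add_le_add hm e2
      _ = 3 / 2 ^ w := by ring
  calc _ ≤ ((S.biUnion T).card : ℝ) := by exact_mod_cast Finset.card_le_card hsub
    _ ≤ ∑ q ∈ S, ((T q).card : ℝ) := by exact_mod_cast Finset.card_biUnion_le
    _ ≤ ∑ q ∈ S, (2 ^ n * (3 * (2 * (3 / 2 ^ w) + 2 ^ L / 2 ^ n))) :=
        Finset.sum_le_sum fun q _ => card_near_int_le n L _ (by positivity)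
    _ = S.card * (2 ^ n * (3 * (2 * (3 / 2 ^ w) + 2 ^ L / 2 ^ n))) := by simp
    _ ≤ (C * (2 * 2 ^ w) ^ s) * (2 ^ n * (3 * (2 * (3 / 2 ^ w) + 2 ^ L / 2 ^ n))) := by gcongr
    _ = _ := by ring

/-- If the conditional variance barely drops beyond resolution `2 ^ (-L)` for two directions at
distance about `2 ^ (-L)`, then it is small. -/
lemma mul_condVar_sub_le (hb : 2 ≤ b) (hP : ProjHomogeneous b n P C s e) (hC : 0 ≤ C)
    {L w : ℕ} (hw : 1 ≤ w) (v : ℕ) (he : 2 ^ L * |e' - e| ≤ 1 / 2 ^ w) :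
    2 ^ L * |e' - e| * (condVar b n P e L
        - (C * (2 * 2 ^ w) ^ s * (3 * (2 * (3 / 2 ^ w) + 2 ^ L / 2 ^ n)) + ((L + w : ℕ) : ℝ) / n))
      ≤ √(condVar b n P e L - condVar b n P e (L + v))
        + √(condVar b n P e' L - condVar b n P e' (L + v)) + 2 / 2 ^ v := by
  classical
  rcases (Nat.zero_le (scaleSpace P n).card).eq_or_lt with h0 | h0
  · have : ∀ e l, condVar b n P e l = 0 := fun e l => by simp [condVar, ← h0]
    simp only [this, zero_sub]
    have h1 : 0 ≤ C * (2 * 2 ^ w) ^ s * (3 * (2 * (3 / 2 ^ w) + 2 ^ L / 2 ^ n))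
        + ((L + w : ℕ) : ℝ) / n := by positivity
    have h2 : 0 ≤ 2 ^ L * |e' - e| := by positivity
    have h3 : 0 ≤ √(-0) + √(-0) + 2 / (2 : ℝ) ^ v := by positivity
    nlinarith
  set N : ℝ := ((scaleSpace P n).card : ℝ) with hN
  have hN0 : 0 < N := by rw [hN]; exact_mod_cast h0
  set c := 2 ^ L * (e' - e) with hc
  have hcabs : |c| = 2 ^ L * |e' - e| := by rw [hc, abs_mul, abs_of_pos (by positivity)]
  rw [← hcabs] at he ⊢
  have main := abs_mul_classVar_sub_le (s := scaleSpace P n) (B := scaleLabel b)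
    (a := scaleProj b n e L) (a' := scaleProj b n e' L) (y := scaleFract b) (c := c)
    (η := 2 / 2 ^ w) v (by calc 2 * |c| ≤ 2 * (1 / 2 ^ w) := by gcongr
                            _ = _ := by ring)
    (fun ω _ => scaleFract_mem ω) (fun ω _ => scaleProj_change e e' L ω)
  have hsq : ∀ e, ∑ ω ∈ scaleSpace P n, |classAvg (scaleSpace P n)
      (fun ω => (scaleLabel b ω, ⌊(2 : ℝ) ^ v * scaleProj b n e L ω⌋)) (scaleFract b) ω
        - classAvg (scaleSpace P n) (fun ω => (scaleLabel b ω, ⌊scaleProj b n e L ω⌋))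
          (scaleFract b) ω| ≤ N * √(condVar b n P e L - condVar b n P e (L + v)) := by
    intro e
    simp only [← scaleProj_add]
    refine (sum_abs_classAvg_sub_le (fun ω _ ω' _ h => scaleLabel_refine v ω ω' h)).trans
      (le_of_eq ?_)
    have : N * (classVar (scaleSpace P n) (fun ω => (scaleLabel b ω, ⌊scaleProj b n e L ω⌋))
          (scaleFract b) - classVar (scaleSpace P n)
          (fun ω => (scaleLabel b ω, ⌊scaleProj b n e (L + v) ω⌋)) (scaleFract b))
        = N ^ 2 * (condVar b n P e L - condVar b n P e (L + v)) := by
      simp only [condVar, ← hN]; field_simp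
    rw [← hN, this, Real.sqrt_mul (by positivity), Real.sqrt_sq hN0.le]
  have hbad := card_not_edgeFree_le (L := L) hb hP hw hC
  have h1 := main.trans (add_le_add (add_le_add (hsq e) (hsq e')) le_rfl)
  rw [← hN] at h1 hbad
  have h2 : |c| * (condVar b n P e L - (({ω ∈ scaleSpace P n | ¬ EdgeFree (scaleSpace P n)
      (scaleLabel b) (scaleProj b n e L) (2 / 2 ^ w) ω} : Finset _).card : ℝ) / N)
      ≤ √(condVar b n P e L - condVar b n P e (L + v))
        + √(condVar b n P e' L - condVar b n P e' (L + v)) + 2 / 2 ^ v := by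
    rw [← mul_le_mul_iff_right₀ hN0]
    refine le_trans (le_of_eq ?_) (h1.trans (le_of_eq ?_))
    · simp only [condVar, ← hN]; field_simp
    · ring
  refine le_trans ?_ h2
  gcongr

end CondVar

/-! ### Entropy bounds for labellings -/

section Entropy

variable {α γ γ' : Type*} {P : Finset α} {g : α → γ} {g' : α → γ'}

/-- Gibbs' inequality for the conditional entropy of a labelling `g'` given a labelling `g`. -/
lemma sum_log_card_div_le {W : α → ℝ} (hW : ∀ p ∈ P, 0 < W p)
    (hK : ∀ p ∈ P, ∑ q ∈ labelClass P g p, W q / (labelClass P g' q).card ≤ 1) :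
    ∑ p ∈ P, (Real.log (labelClass P g p).card - Real.log (labelClass P g' p).card)
      ≤ ∑ p ∈ P, -Real.log (W p) := by
  have h1 : ∀ p ∈ P, Real.log (labelClass P g p).card - Real.log (labelClass P g' p).card
      ≤ -Real.log (W p) + (∑ _q ∈ labelClass P g p, W p / (labelClass P g' p).card - 1) := by
    intro p hp
    have hN := labelClass_card_pos (g := g) hp
    have hN' := labelClass_card_pos (g := g') hp
    have hw := hW p hp
    have := Real.log_le_sub_one_of_pos
      (by positivity : 0 < (labelClass P g p).card * (W p / (labelClass P g' p).card))
    rw [Real.log_mul hN.ne' (by positivity), Real.log_div hw.ne' hN'.ne'] at this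
    rw [Finset.sum_const, nsmul_eq_mul]
    linarith
  refine (Finset.sum_le_sum h1).trans ?_
  rw [Finset.sum_add_distrib, Finset.sum_sub_distrib, sum_labelClass_comm
    (fun p _ => W p / (labelClass P g' p).card)]
  have := Finset.sum_le_sum hK
  linarith

lemma sum_inv_card_labelClass_le [DecidableEq γ] {A : Finset α} (hA : A ⊆ P) {D : α → γ}
    (hD : ∀ p ∈ A, ∀ q ∈ A, D p = D q → g' p = g' q) :
    ∑ p ∈ A, 1 / ((labelClass P g' p).card : ℝ) ≤ (A.image D).card := by
  rw [← Finset.sum_fiberwise_of_maps_to (g := D) (t := A.image D)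
    (fun p hp => Finset.mem_image_of_mem D hp)]
  calc _ ≤ ∑ _z ∈ A.image D, (1 : ℝ) := ?_
    _ = _ := by simp
  apply Finset.sum_le_sum
  intro z hz
  obtain ⟨p₀, hp₀, rfl⟩ := Finset.mem_image.mp hz
  set B := {p ∈ A | D p = D p₀} with hB
  have hBpos : 0 < (B.card : ℝ) := by
    exact_mod_cast Finset.card_pos.mpr ⟨p₀, by simp [hB, hp₀]⟩
  calc ∑ p ∈ B, 1 / ((labelClass P g' p).card : ℝ) ≤ ∑ _p ∈ B, 1 / (B.card : ℝ) := by
        apply Finset.sum_le_sum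
        intro p hp
        apply one_div_le_one_div_of_le hBpos
        norm_cast
        apply Finset.card_le_card
        intro q hq
        rw [hB, Finset.mem_filter] at hp hq
        exact mem_labelClass.mpr ⟨hA hq.1, hD q hq.1 p hp.1 (hq.2.trans hp.2.symm)⟩
    _ = 1 := by rw [Finset.sum_const, nsmul_eq_mul]; field_simp

open Classical in
/-- If the next base-`b` digit of `y` is mostly determined, up to few choices, by the label,
then refining by that digit adds little entropy. -/
lemma sum_log_card_div_le_of_predicted {b : ℕ} (hb : 0 < b) {y A : α → ℝ} {M : α → ℤ}
    (hy : ∀ p ∈ P, 0 ≤ y p ∧ y p < 1)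
    (hg : ∀ p ∈ P, ∀ q ∈ P, g p = g q → ⌊b * y p⌋ = ⌊b * y q⌋ → g' p = g' q)
    (hM : ∀ p ∈ P, ∀ q ∈ P, g p = g q → |M p - M q| ≤ 1)
    (hA : ∀ p ∈ P, ∀ q ∈ P, g p = g q → M p = M q → A p = A q) :
    ∑ p ∈ P, (Real.log (labelClass P g p).card - Real.log (labelClass P g' p).card)
      ≤ P.card * Real.log 24
        + Real.log (2 * b) * ({p ∈ P | 1 / (b : ℝ) < |y p - A p|} : Finset α).card := by
  have hb0 : (0 : ℝ) < b := by exact_mod_cast hb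
  set D : α → ℤ := fun p => ⌊b * y p⌋ with hDdef
  set pred : α → Prop := fun p => ∃ q ∈ P, g q = g p ∧ D q = D p ∧ |y q - A q| ≤ 1 / b with hpred
  set W : α → ℝ := fun p => (if pred p then 1 / 24 else 0) + 1 / (2 * b) with hW
  have hWpos : ∀ p, 1 / (2 * (b : ℝ)) ≤ W p := by
    intro p; simp only [hW]; split_ifs <;> simp
  have hW0 : ∀ p, 0 < W p := fun p => lt_of_lt_of_le (by positivity) (hWpos p)
  refine (sum_log_card_div_le (fun p _ => hW0 p) ?_).trans ?_
  · intro p₀ hp₀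
    have hsub : labelClass P g p₀ ⊆ P := fun q hq => (mem_labelClass.mp hq).1
    have hDg : ∀ p ∈ labelClass P g p₀, ∀ q ∈ labelClass P g p₀, D p = D q → g' p = g' q := by
      intro p hp q hq h
      obtain ⟨h1, h2⟩ := mem_labelClass.mp hp
      obtain ⟨h3, h4⟩ := mem_labelClass.mp hq
      exact hg p h1 q h3 (h2.trans h4.symm) h
    have b1 : ∑ p ∈ labelClass P g p₀, 1 / ((labelClass P g' p).card : ℝ) ≤ b := by
      refine (sum_inv_card_labelClass_le hsub hDg).trans ?_
      have : (labelClass P g p₀).image D ⊆ Finset.Ico (0 : ℤ) b := by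
        intro z hz
        obtain ⟨p, hp, rfl⟩ := Finset.mem_image.mp hz
        obtain ⟨h1, h2⟩ := hy p (hsub hp)
        rw [Finset.mem_Ico]
        refine ⟨Int.floor_nonneg.mpr (by positivity), Int.floor_lt.mpr ?_⟩
        push_cast
        nlinarith
      have := Finset.card_le_card this
      rw [Int.card_Ico] at this
      exact_mod_cast (by simpa using this)
    have b2 : ∑ p ∈ (labelClass P g p₀).filter pred, 1 / ((labelClass P g' p).card : ℝ) ≤ 12 := by
      refine (sum_inv_card_labelClass_le ((Finset.filter_subset _ _).trans hsub)
        (fun p hp q hq => hDg p (Finset.mem_of_mem_filter p hp) q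
          (Finset.mem_of_mem_filter q hq))).trans ?_
      set G : ℤ → Finset ℤ := fun m =>
        ({q ∈ labelClass P g p₀ | M q = m ∧ |y q - A q| ≤ 1 / b} : Finset α).image D with hG
      have hGc : ∀ m, ((G m).card : ℝ) ≤ 4 := by
        intro m
        rcases ({q ∈ labelClass P g p₀ | M q = m ∧ |y q - A q| ≤ 1 / b} :
          Finset α).eq_empty_or_nonempty with h | ⟨q₀, hq₀⟩
        · simp only [hG, h]; simp
        · refine (card_int_le (x := b * A q₀ - 1 / 2) (D := 3 / 2) (by norm_num) ?_).trans
            (by norm_num)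
          intro z hz
          obtain ⟨q, hq, rfl⟩ := Finset.mem_image.mp hz
          simp only [Finset.mem_filter, mem_labelClass] at hq hq₀
          have hAq : A q = A q₀ := hA q hq.1.1 q₀ hq₀.1.1 (hq.1.2.trans hq₀.1.2.symm)
            (hq.2.1.trans hq₀.2.1.symm)
          have h1 : |(b : ℝ) * y q - b * A q₀| ≤ 1 := by
            rw [← mul_sub, abs_mul, abs_of_pos hb0, ← hAq]
            calc (b : ℝ) * |y q - A q| ≤ b * (1 / b) := by gcongr; exact hq.2.2
              _ = 1 := by field_simp
          have h2 := Int.floor_le ((b : ℝ) * y q)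
          have h3 := Int.lt_floor_add_one ((b : ℝ) * y q)
          simp only [hDdef]
          rw [abs_le] at h1 ⊢
          constructor <;> linarith [h1.1, h1.2]
      have hsub2 : ((labelClass P g p₀).filter pred).image D
          ⊆ (Finset.Icc (M p₀ - 1) (M p₀ + 1)).biUnion G := by
        intro z hz
        obtain ⟨p, hp, rfl⟩ := Finset.mem_image.mp hz
        rw [Finset.mem_filter, mem_labelClass] at hp
        obtain ⟨⟨hp1, hp2⟩, q, hq1, hq2, hq3, hq4⟩ := hp
        rw [Finset.mem_biUnion]
        refine ⟨M q, ?_, ?_⟩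
        · have := abs_le.mp (hM q hq1 p₀ hp₀ (hq2.trans hp2))
          rw [Finset.mem_Icc]; omega
        · rw [← hq3]
          apply Finset.mem_image_of_mem
          rw [Finset.mem_filter, mem_labelClass]
          exact ⟨⟨hq1, hq2.trans hp2⟩, rfl, hq4⟩
      calc _ ≤ (((Finset.Icc (M p₀ - 1) (M p₀ + 1)).biUnion G).card : ℝ) := by
            exact_mod_cast Finset.card_le_card hsub2
        _ ≤ ∑ m ∈ Finset.Icc (M p₀ - 1) (M p₀ + 1), ((G m).card : ℝ) := by
            exact_mod_cast Finset.card_biUnion_le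
        _ ≤ ∑ m ∈ Finset.Icc (M p₀ - 1) (M p₀ + 1), (4 : ℝ) :=
            Finset.sum_le_sum fun m _ => hGc m
        _ = 12 := by
            rw [Finset.sum_const, Int.card_Icc, nsmul_eq_mul]
            have : (M p₀ + 1 + 1 - (M p₀ - 1)).toNat = 3 := by
              have : M p₀ + 1 + 1 - (M p₀ - 1) = 3 := by ring
              rw [this]; rfl
            rw [this]; norm_num
    have e1 : ∀ p, W p / ((labelClass P g' p).card : ℝ)
        = 1 / 24 * (if pred p then 1 / ((labelClass P g' p).card : ℝ) else 0)
          + 1 / (2 * b) * (1 / ((labelClass P g' p).card : ℝ)) := by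
      intro p; simp only [hW]; split_ifs <;> ring
    simp only [e1, Finset.sum_add_distrib, ← Finset.mul_sum]
    rw [← Finset.sum_filter]
    calc _ ≤ 1 / 24 * 12 + 1 / (2 * b) * (b : ℝ) := by gcongr
      _ = 1 := by field_simp; norm_num
  · have e2 : ∀ p ∈ P, -Real.log (W p)
        ≤ Real.log 24 + Real.log (2 * b) * (if 1 / (b : ℝ) < |y p - A p| then 1 else 0) := by
      intro p hp
      split_ifs with h
      · have h1 := Real.log_le_log (by positivity) (hWpos p)
        rw [one_div, Real.log_inv] at h1
        have := Real.log_nonneg (by norm_num : (1 : ℝ) ≤ 24)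
        linarith
      · have hp' : pred p := ⟨p, hp, rfl, rfl, not_lt.mp h⟩
        have h1 : 1 / 24 ≤ W p := by
          simp only [hW, hp', if_true]
          have : 0 ≤ 1 / (2 * (b : ℝ)) := by positivity
          linarith
        have h2 := Real.log_le_log (by norm_num) h1
        rw [one_div, Real.log_inv] at h2
        linarith
    refine (Finset.sum_le_sum e2).trans (le_of_eq ?_)
    rw [Finset.sum_add_distrib, ← Finset.mul_sum, Finset.card_filter]
    push_cast
    simp

lemma sum_log_card_div_le_digit {b : ℕ} (hb : 0 < b) {y : α → ℝ}
    (hy : ∀ p ∈ P, 0 ≤ y p ∧ y p < 1)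
    (hg : ∀ p ∈ P, ∀ q ∈ P, g p = g q → ⌊b * y p⌋ = ⌊b * y q⌋ → g' p = g' q) :
    ∑ p ∈ P, (Real.log (labelClass P g p).card - Real.log (labelClass P g' p).card)
      ≤ P.card * Real.log 24 + Real.log (2 * b) * P.card := by
  classical
  refine (sum_log_card_div_le_of_predicted hb hy hg (A := fun _ => 0) (M := fun _ => 0)
    (by simp) (by simp)).trans ?_
  gcongr
  · apply Real.log_nonneg
    have : (1 : ℝ) ≤ b := by exact_mod_cast hb
    linarith
  · exact Finset.filter_subset _ _

end Entropy

section LowerBound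

variable {b n : ℕ} {P : Finset (ℝ × ℝ)} {C s e E d : ℝ} {l : ℕ}

/-- The strip index at scale `i + 1` is determined by the strip index at scale `i` and the next
digit. -/
lemma floor_pow_succ_mul (b i : ℕ) (x : ℝ) :
    ⌊(b : ℝ) ^ (i + 1) * x⌋
      = b * ⌊(b : ℝ) ^ i * x⌋ + ⌊b * Int.fract ((b : ℝ) ^ i * x)⌋ := by
  have : (b : ℝ) ^ (i + 1) * x
      = ((b * ⌊(b : ℝ) ^ i * x⌋ : ℤ) : ℝ) + b * Int.fract ((b : ℝ) ^ i * x) := by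
    rw [Int.fract]; push_cast; ring
  rw [this, Int.floor_intCast_add]

/-- The points of the separated set `P` with nearly the same projection and the same strip. -/
lemma card_labelClass_le (hb : 2 ≤ b) (he : |e| ≤ E)
    (hsep : ∀ p ∈ P, ∀ q ∈ P, p ≠ q →
      1 ≤ 8 * (b : ℝ) ^ n * |p.1 - q.1| ∨ 1 ≤ 8 * (b : ℝ) ^ n * |p.2 - q.2|)
    {z : ℝ × ℝ → ℝ} (hz : ∀ p ∈ P, |p.1 + e * p.2 - z p| ≤ ((b : ℝ) ^ n)⁻¹)
    {p₀ : ℝ × ℝ} (hp₀ : p₀ ∈ P) :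
    ((labelClass P (fun p => (z p, ⌊(b : ℝ) ^ n * p.2⌋)) p₀).card : ℝ)
      ≤ 19 * (35 + 16 * E) := by
  classical
  have hE : 0 ≤ E := (abs_nonneg e).trans he
  set Q : ℝ := (b : ℝ) ^ n with hQ
  have hQ0 : 0 < Q := by positivity
  set A := labelClass P (fun p => (z p, ⌊Q * p.2⌋)) p₀ with hA
  have h2 : ∀ p ∈ A, Q * |p.2 - p₀.2| ≤ 1 := by
    intro p hp
    obtain ⟨hp1, hp2⟩ := mem_labelClass.mp hp
    simp only [Prod.mk.injEq] at hp2
    have := Int.abs_sub_lt_one_of_floor_eq_floor hp2.2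
    rw [← mul_sub, abs_mul, abs_of_pos hQ0] at this
    exact this.le
  have h1 : ∀ p ∈ A, Q * |p.1 - p₀.1| ≤ 2 + E := by
    intro p hp
    obtain ⟨hp1, hp2⟩ := mem_labelClass.mp hp
    simp only [Prod.mk.injEq] at hp2
    have a1 := hz p hp1
    have a2 := hz p₀ hp₀
    have a3 := h2 p hp
    rw [hp2.1] at a1
    have e1 : p.1 - p₀.1 = (p.1 + e * p.2 - z p₀) - (p₀.1 + e * p₀.2 - z p₀)
        - e * (p.2 - p₀.2) := by ring
    rw [e1]
    calc Q * _ ≤ Q * (Q⁻¹ + Q⁻¹ + E * |p.2 - p₀.2|) := by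
          gcongr
          refine (abs_sub _ _).trans (add_le_add ((abs_sub _ _).trans (add_le_add a1 a2)) ?_)
          rw [abs_mul]; gcongr
      _ = 2 + E * (Q * |p.2 - p₀.2|) := by field_simp; ring
      _ ≤ 2 + E * 1 := by gcongr
      _ = _ := by ring
  set φ : ℝ × ℝ → ℤ × ℤ := fun p => (⌊8 * Q * p.1⌋, ⌊8 * Q * p.2⌋) with hφ
  have hinj : Set.InjOn φ A := by
    intro p hp q hq h
    simp only [hφ, Prod.mk.injEq] at h
    by_contra hne
    have k1 := Int.abs_sub_lt_one_of_floor_eq_floor h.1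
    have k2 := Int.abs_sub_lt_one_of_floor_eq_floor h.2
    rw [← mul_sub, abs_mul, abs_of_pos (by positivity)] at k1 k2
    rcases hsep p (mem_labelClass.mp hp).1 q (mem_labelClass.mp hq).1 hne with h | h <;> linarith
  have hfl : ∀ {D u v : ℝ}, Q * |u - v| ≤ D → |(⌊8 * Q * u⌋ : ℝ) - 8 * Q * v| ≤ 8 * D + 1 := by
    intro D u v h
    have f1 := Int.floor_le (8 * Q * u)
    have f2 := Int.lt_floor_add_one (8 * Q * u)
    have : |8 * Q * u - 8 * Q * v| ≤ 8 * D := by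
      rw [← mul_sub, abs_mul, abs_of_pos (by positivity)]; linarith
    rw [abs_le] at this ⊢
    constructor <;> linarith [this.1, this.2]
  have hc : A.card ≤ (A.image fun p => ⌊8 * Q * p.1⌋).card * (A.image fun p => ⌊8 * Q * p.2⌋).card := by
    rw [← Finset.card_product, ← Finset.card_image_of_injOn hinj]
    apply Finset.card_le_card
    intro w hw
    obtain ⟨p, hp, rfl⟩ := Finset.mem_image.mp hw
    exact Finset.mem_product.mpr ⟨Finset.mem_image_of_mem _ hp, Finset.mem_image_of_mem _ hp⟩
  have c1 : ((A.image fun p => ⌊8 * Q * p.1⌋).card : ℝ) ≤ 2 * (8 * (2 + E) + 1) + 1 := by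
    apply card_int_le (x := 8 * Q * p₀.1) (by positivity)
    intro j hj
    obtain ⟨p, hp, rfl⟩ := Finset.mem_image.mp hj
    exact hfl (h1 p hp)
  have c2 : ((A.image fun p => ⌊8 * Q * p.2⌋).card : ℝ) ≤ 2 * (8 * 1 + 1) + 1 := by
    apply card_int_le (x := 8 * Q * p₀.2) (by positivity)
    intro j hj
    obtain ⟨p, hp, rfl⟩ := Finset.mem_image.mp hj
    exact hfl (h2 p hp)
  calc (A.card : ℝ) ≤ (A.image fun p => ⌊8 * Q * p.1⌋).card * (A.image fun p => ⌊8 * Q * p.2⌋).card := by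
        exact_mod_cast hc
    _ ≤ (2 * (8 * (2 + E) + 1) + 1) * (2 * (8 * 1 + 1) + 1) := by gcongr
    _ = _ := by ring

open Classical in
/-- A set with many points but small projection has many points which are badly predicted. -/
lemma entropy_le (hb : 2 ≤ b) (hC : 0 < C) (hE : 0 < E) (he : |e| ≤ E)
    (hPr : ∀ p ∈ P, |p.1| ≤ 1 ∧ 0 ≤ p.2 ∧ p.2 < 1)
    (hsep : ∀ p ∈ P, ∀ q ∈ P, p ≠ q →
      1 ≤ 8 * (b : ℝ) ^ n * |p.1 - q.1| ∨ 1 ≤ 8 * (b : ℝ) ^ n * |p.2 - q.2|)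
    (hP : ProjHomogeneous b n P C s e) (A : ℝ × ℝ → ℕ → ℝ) (j : ℕ)
    (hA : ∀ i, ∀ p ∈ P, ∀ q ∈ P, ⌊(b : ℝ) ^ i * p.2⌋ = ⌊(b : ℝ) ^ i * q.2⌋ →
      ⌊scaleProj b n e l (p, i, j)⌋ = ⌊scaleProj b n e l (q, i, j)⌋ → A p i = A q i) :
    P.card * (Real.log P.card - Real.log (C * ((1 + E) * b ^ n) ^ s)
      - Real.log (19 * (35 + 16 * E)) - n * Real.log 24 - (l + 1) * Real.log (2 * b))
      ≤ Real.log (2 * b) * ∑ i ∈ Finset.range n,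
        (({p ∈ P | 1 / (b : ℝ) < |scaleFract b (p, i, j) - A p i|} : Finset _).card : ℝ) := by
  have hb2 : (2 : ℝ) ≤ b := by exact_mod_cast hb
  have hb1 : (1 : ℝ) ≤ (b : ℝ) ^ n := one_le_pow₀ (by linarith)
  have hl2b : 0 ≤ Real.log (2 * b) := Real.log_nonneg (by linarith)
  obtain ⟨S, hS, hSc⟩ := hP 0 (1 + E) ((b : ℝ) ^ n)⁻¹ le_rfl
    ((inv_le_one_of_one_le₀ hb1).trans (by linarith))
  rw [div_inv_eq_mul] at hSc
  have hS' : ∀ p ∈ P, ∃ q ∈ S, |p.1 + e * p.2 - q| ≤ ((b : ℝ) ^ n)⁻¹ := by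
    intro p hp
    apply hS p hp
    rw [sub_zero]
    refine (abs_add_le _ _).trans (add_le_add (hPr p hp).1 ?_)
    rw [abs_mul, abs_of_nonneg (hPr p hp).2.1]
    calc |e| * p.2 ≤ E * 1 := mul_le_mul he (hPr p hp).2.2.le (hPr p hp).2.1 hE.le
      _ = E := mul_one E
  set M₀ : ℝ := C * ((1 + E) * b ^ n) ^ s with hM₀
  have hM₀pos : 0 < M₀ := by positivity
  choose! z hzS hz using hS'
  set Z : ℕ → ℝ × ℝ → ℝ × ℤ := fun i p => (z p, ⌊(b : ℝ) ^ i * p.2⌋) with hZ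
  set H : ℕ → ℝ := fun i => ∑ p ∈ P, Real.log (labelClass P (Z i) p).card with hH
  have first : P.card * Real.log P.card - ∑ p ∈ P, Real.log (labelClass P z p).card
      ≤ P.card * Real.log M₀ := by
    have := sum_log_card_div_le (P := P) (g := fun _ => ()) (g' := z) (W := fun _ => M₀⁻¹)
      (fun _ _ => by positivity) ?_
    · have hc : ∀ p, labelClass P (fun _ => ()) p = P := fun p => by ext; simp [mem_labelClass]
      simp only [hc, Finset.sum_sub_distrib, Finset.sum_const, nsmul_eq_mul, Real.log_inv,
        neg_neg] at this
      exact this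
    · intro p _
      have h1 := sum_inv_card_labelClass_le (P := P) (g' := z) (D := z)
        (A := labelClass P (fun _ => ()) p) (fun q hq => (mem_labelClass.mp hq).1)
        (fun _ _ _ _ h => h)
      have h2 : ((labelClass P (fun _ => ()) p).image z).card ≤ S.card := by
        apply Finset.card_le_card
        intro w hw
        obtain ⟨q, hq, rfl⟩ := Finset.mem_image.mp hw
        exact hzS q (mem_labelClass.mp hq).1
      have h3 : (((labelClass P (fun _ => ()) p).image z).card : ℝ) ≤ M₀ :=
        (by exact_mod_cast h2 : _ ≤ (S.card : ℝ)).trans hSc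
      calc _ = M₀⁻¹ * ∑ q ∈ labelClass P (fun _ => ()) p, 1 / ((labelClass P z q).card : ℝ) := by
            rw [Finset.mul_sum]
            exact Finset.sum_congr rfl fun q _ => by ring
        _ ≤ M₀⁻¹ * M₀ := by gcongr; exact h1.trans h3
        _ = 1 := by field_simp
  have zeroth : H 0 = ∑ p ∈ P, Real.log (labelClass P z p).card := by
    refine Finset.sum_congr rfl fun p hp => ?_
    congr 3
    ext q
    simp only [mem_labelClass, hZ, Prod.mk.injEq, pow_zero, one_mul]
    refine and_congr_right fun hq => and_iff_left ?_
    rw [Int.floor_eq_zero_iff.mpr (hPr p hp).2, Int.floor_eq_zero_iff.mpr (hPr q hq).2]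
  have last : H n ≤ P.card * Real.log (19 * (35 + 16 * E)) := by
    calc H n ≤ ∑ p ∈ P, Real.log (19 * (35 + 16 * E)) := by
          apply Finset.sum_le_sum
          intro p hp
          exact Real.log_le_log (labelClass_card_pos hp) (card_labelClass_le hb he hsep hz hp)
      _ = _ := by simp
  have step : ∀ i ∈ Finset.range n, H i - H (i + 1) ≤ P.card * Real.log 24
      + Real.log (2 * b) * ((({p ∈ P | 1 / (b : ℝ) < |scaleFract b (p, i, j) - A p i|} :
        Finset _).card : ℝ) + if n < i + (l + 1) then (P.card : ℝ) else 0) := by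
    intro i _
    have hy : ∀ p ∈ P, 0 ≤ scaleFract b (p, i, j) ∧ scaleFract b (p, i, j) < 1 :=
      fun p _ => ⟨Int.fract_nonneg _, Int.fract_lt_one _⟩
    have hg : ∀ p ∈ P, ∀ q ∈ P, Z i p = Z i q → ⌊b * scaleFract b (p, i, j)⌋
        = ⌊b * scaleFract b (q, i, j)⌋ → Z (i + 1) p = Z (i + 1) q := by
      intro p _ q _ h1 h2
      simp only [hZ, Prod.mk.injEq, floor_pow_succ_mul] at h1 ⊢
      simp only [scaleFract] at h2
      rw [h1.1, h1.2, h2]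
      exact ⟨rfl, rfl⟩
    simp only [hH, ← Finset.sum_sub_distrib]
    split_ifs with hi
    · refine (sum_log_card_div_le_digit (by omega) hy hg).trans ?_
      rw [mul_add]
      have : 0 ≤ Real.log (2 * b) * (({p ∈ P | 1 / (b : ℝ) < |scaleFract b (p, i, j) - A p i|} :
        Finset _).card : ℝ) := by positivity
      linarith
    · rw [add_zero]
      refine sum_log_card_div_le_of_predicted (by omega) hy hg
        (M := fun p => ⌊scaleProj b n e l (p, i, j)⌋) ?_ ?_
      · intro p hp q hq h
        simp only [hZ, Prod.mk.injEq] at h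
        have d1 : |p.1 + e * p.2 - (q.1 + e * q.2)| ≤ 2 * ((b : ℝ) ^ n)⁻¹ := by
          have h1 := hz p hp
          have h2 := hz q hq
          rw [h.1] at h1
          rw [abs_le] at h1 h2 ⊢
          constructor <;> linarith [h1.1, h1.2, h2.1, h2.2]
        have d2 : |scaleProj b n e l (p, i, j) - scaleProj b n e l (q, i, j)| ≤ 1 := by
          have : scaleProj b n e l (p, i, j) - scaleProj b n e l (q, i, j)
              = 2 ^ l * (b : ℝ) ^ i * (p.1 + e * p.2 - (q.1 + e * q.2)) := by
            rw [scaleProj_eq, scaleProj_eq, h.2]; ring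
          rw [this, abs_mul, abs_of_pos (by positivity)]
          calc 2 ^ l * (b : ℝ) ^ i * |p.1 + e * p.2 - (q.1 + e * q.2)|
              ≤ 2 ^ l * (b : ℝ) ^ i * (2 * ((b : ℝ) ^ n)⁻¹) := by gcongr
            _ = (2 ^ (l + 1) * (b : ℝ) ^ i) / (b : ℝ) ^ n := by ring
            _ ≤ ((b : ℝ) ^ (l + 1) * (b : ℝ) ^ i) / (b : ℝ) ^ n := by gcongr
            _ = (b : ℝ) ^ (i + (l + 1)) / (b : ℝ) ^ n := by ring
            _ ≤ 1 := div_le_one_of_le₀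
                (pow_le_pow_right₀ (by linarith) (not_lt.mp hi)) (by positivity)
        have f1 := Int.floor_le (scaleProj b n e l (p, i, j))
        have f2 := Int.lt_floor_add_one (scaleProj b n e l (p, i, j))
        have f3 := Int.floor_le (scaleProj b n e l (q, i, j))
        have f4 := Int.lt_floor_add_one (scaleProj b n e l (q, i, j))
        rw [abs_le] at d2 ⊢
        constructor
        · have : ((⌊scaleProj b n e l (q, i, j)⌋ : ℤ) : ℝ)
              < ((⌊scaleProj b n e l (p, i, j)⌋ + 2 : ℤ) : ℝ) := by
            push_cast; linarith [d2.1, d2.2]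
          have := Int.cast_lt.mp this
          omega
        · have : ((⌊scaleProj b n e l (p, i, j)⌋ : ℤ) : ℝ)
              < ((⌊scaleProj b n e l (q, i, j)⌋ + 2 : ℤ) : ℝ) := by
            push_cast; linarith [d2.1, d2.2]
          have := Int.cast_lt.mp this
          omega
      · intro p hp q hq h1 h2
        simp only [hZ, Prod.mk.injEq] at h1
        exact hA i p hp q hq h1.2 h2
  have tele := Finset.sum_le_sum step
  rw [Finset.sum_range_sub', Finset.sum_add_distrib, Finset.sum_const, ← Finset.mul_sum,
    Finset.sum_add_distrib, ← Finset.sum_filter, Finset.sum_const, Finset.card_range, nsmul_eq_mul,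
    nsmul_eq_mul] at tele
  have hcard : (({i ∈ Finset.range n | n < i + (l + 1)} : Finset ℕ).card : ℝ) ≤ l + 1 := by
    have : ({i ∈ Finset.range n | n < i + (l + 1)} : Finset ℕ) ⊆ Finset.Ico (n - (l + 1)) n := by
      intro i hi
      simp at hi ⊢
      omega
    have h5 := Finset.card_le_card this
    rw [Nat.card_Ico] at h5
    exact_mod_cast h5.trans (by omega)
  have : Real.log (2 * b) * ((({i ∈ Finset.range n | n < i + (l + 1)} : Finset ℕ).card : ℝ)
      * P.card) ≤ Real.log (2 * b) * ((l + 1) * P.card) := by gcongr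
  rw [mul_add] at tele
  linarith

/-- The conditional variance of a large set with small projections is bounded below. -/
lemma le_condVar (hb : 2 ≤ b) (hn : 0 < n) (hC : 0 < C) (hE : 0 < E) (he : |e| ≤ E)
    (hPr : ∀ p ∈ P, |p.1| ≤ 1 ∧ 0 ≤ p.2 ∧ p.2 < 1)
    (hsep : ∀ p ∈ P, ∀ q ∈ P, p ≠ q →
      1 ≤ 8 * (b : ℝ) ^ n * |p.1 - q.1| ∨ 1 ≤ 8 * (b : ℝ) ^ n * |p.2 - q.2|)
    (hcard : ((b : ℝ) ^ n) ^ d ≤ P.card)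
    (hP : ProjHomogeneous b n P C s e) (l : ℕ) :
    ((d - s) * Real.log b - Real.log 24
      - (Real.log (C * (1 + E) ^ s) + Real.log (19 * (35 + 16 * E))
        + (l + 1) * Real.log (2 * b)) / n) / (Real.log (2 * b) * b ^ 2)
      ≤ condVar b n P e l := by
  classical
  have hb2 : (2 : ℝ) ≤ b := by exact_mod_cast hb
  have hb0 : (0 : ℝ) < b := by linarith
  have hn0 : (0 : ℝ) < n := by exact_mod_cast hn
  have hQ0 : (0 : ℝ) < (b : ℝ) ^ n := by positivity
  have hl2b : 0 < Real.log (2 * b) := Real.log_pos (by linarith)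
  have hN : (0 : ℝ) < P.card := lt_of_lt_of_le (by positivity) hcard
  set A : (ℝ × ℝ) × ℕ × ℕ → ℝ := classAvg (scaleSpace P n)
    (fun ω => (scaleLabel b ω, ⌊scaleProj b n e l ω⌋)) (scaleFract b) with hA
  have hj : ∀ j ∈ Finset.range (2 ^ n), _ := fun j _ => entropy_le (l := l) hb hC hE he hPr hsep hP
    (fun p i => A (p, i, j)) j (by
      intro i p _ q _ h1 h2
      apply classAvg_congr
      simp only [scaleLabel, h1, h2])
  set X : ℝ := (d - s) * Real.log b - Real.log 24
      - (Real.log (C * (1 + E) ^ s) + Real.log (19 * (35 + 16 * E))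
        + (l + 1) * Real.log (2 * b)) / n with hX
  have hXle : n * X ≤ Real.log P.card - Real.log (C * ((1 + E) * b ^ n) ^ s)
      - Real.log (19 * (35 + 16 * E)) - n * Real.log 24 - (l + 1) * Real.log (2 * b) := by
    have h1 : n * (d * Real.log b) ≤ Real.log P.card := by
      have := Real.log_le_log (by positivity) hcard
      rw [Real.log_rpow hQ0, Real.log_pow] at this
      linarith
    have h2 : Real.log (C * ((1 + E) * b ^ n) ^ s)
        = Real.log (C * (1 + E) ^ s) + n * (s * Real.log b) := by
      rw [Real.mul_rpow (by positivity) hQ0.le, ← mul_assoc, Real.log_mul (by positivity)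
        (by positivity), Real.log_rpow hQ0, Real.log_pow]
      ring
    rw [h2]
    have : n * X = n * ((d - s) * Real.log b) - n * Real.log 24
      - (Real.log (C * (1 + E) ^ s) + Real.log (19 * (35 + 16 * E))
        + (l + 1) * Real.log (2 * b)) := by rw [hX]; field_simp
    rw [this]
    linarith
  have hsum := Finset.sum_le_sum hj
  rw [Finset.sum_const, Finset.card_range, nsmul_eq_mul, ← Finset.mul_sum] at hsum
  set K : Finset ((ℝ × ℝ) × ℕ × ℕ) :=
    {ω ∈ scaleSpace P n | 1 / (b : ℝ) < |scaleFract b ω - A ω|} with hK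
  have hKc : (K.card : ℝ) = ∑ j ∈ Finset.range (2 ^ n), ∑ i ∈ Finset.range n,
      (({p ∈ P | 1 / (b : ℝ) < |scaleFract b (p, i, j) - A (p, i, j)|} : Finset _).card : ℝ) := by
    simp only [hK, Finset.card_filter, scaleSpace, Finset.sum_product]
    push_cast
    rw [Finset.sum_comm, Finset.sum_comm (s := Finset.range (2 ^ n))]
    exact Finset.sum_congr rfl fun i _ => Finset.sum_comm
  rw [← hKc] at hsum
  have hvar : K.card * (1 / (b : ℝ)) ^ 2
      ≤ classVar (scaleSpace P n) (fun ω => (scaleLabel b ω, ⌊scaleProj b n e l ω⌋))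
        (scaleFract b) := by
    calc K.card * (1 / (b : ℝ)) ^ 2 = ∑ ω ∈ K, (1 / (b : ℝ)) ^ 2 := by
          rw [Finset.sum_const, nsmul_eq_mul]
      _ ≤ ∑ ω ∈ K, (scaleFract b ω - A ω) ^ 2 := by
          apply Finset.sum_le_sum
          intro ω hω
          have := (Finset.mem_filter.mp hω).2
          rw [← sq_abs (scaleFract b ω - A ω)]
          gcongr
      _ ≤ _ := Finset.sum_le_sum_of_subset_of_nonneg (Finset.filter_subset _ _)
          fun _ _ _ => sq_nonneg _
  rw [condVar, card_scaleSpace, div_le_div_iff₀ (by positivity) (by positivity)]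
  have h3 : (2 : ℝ) ^ n * (P.card * (n * X)) ≤ Real.log (2 * b) * K.card := by
    push_cast at hsum
    refine le_trans ?_ hsum
    gcongr
  calc X * (P.card * (n * 2 ^ n)) = (2 : ℝ) ^ n * (P.card * (n * X)) := by ring
    _ ≤ Real.log (2 * b) * K.card := h3
    _ = (K.card * (1 / (b : ℝ)) ^ 2) * (Real.log (2 * b) * b ^ 2) := by field_simp
    _ ≤ _ := by gcongr

end LowerBound

/-! ### Countability of the directions with homogeneous projections -/

/-- If `W` drops by a fixed amount between any point and all points whose `e`-value is close but
different, then `e` takes countably many values. -/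
theorem countable_range_of_locally_drop {ι : Type*} {e W : ι → ℝ} {η : ℝ} (hη : 0 < η)
    (h : ∀ x, ∃ δ > 0, ∀ x', e x' ≠ e x → |e x' - e x| < δ → W x' < W x - η) :
    (range e).Countable := by
  have hbin : ∀ k : ℤ, (e '' {x | ⌊W x / η⌋ = k}).Countable := by
    intro k
    rw [Set.countable_coe_iff.symm]
    have : DiscreteTopology (e '' {x | ⌊W x / η⌋ = k}) := by
      rw [discreteTopology_iff_isOpen_singleton]
      rintro ⟨_, x, hx, rfl⟩
      obtain ⟨δ, hδ, hd⟩ := h x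
      rw [Metric.isOpen_singleton_iff]
      refine ⟨δ, hδ, ?_⟩
      rintro ⟨_, x', hx', rfl⟩ hdist
      by_contra hne
      have hne' : e x' ≠ e x := fun hh => hne (Subtype.ext hh)
      have h1 := hd x' hne' (by simpa [Subtype.dist_eq, Real.dist_eq] using hdist)
      have h2 : W x' / η < W x / η - 1 := by
        rw [div_lt_iff₀ hη, sub_mul, div_mul_cancel₀ _ hη.ne']; linarith
      have h3 := Int.floor_le (W x' / η)
      have h4 := Int.lt_floor_add_one (W x' / η)
      have h5 := Int.floor_le (W x / η)
      have h6 := Int.lt_floor_add_one (W x / η)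
      have hx1 : ⌊W x / η⌋ = k := hx
      have hx2 : ⌊W x' / η⌋ = k := hx'
      rw [hx2] at h3 h4
      rw [hx1] at h5 h6
      linarith
    exact TopologicalSpace.separableSpace_iff_countable.1 inferInstance
  refine (Set.countable_iUnion hbin).mono ?_
  rintro _ ⟨x, rfl⟩
  exact mem_iUnion.2 ⟨_, x, rfl, rfl⟩

theorem countable_range_of_energy {ι : Type*} {e : ι → ℝ} {V : ℕ → ι → ℝ} {c : ℝ} {κ : ℕ → ℝ}
    (hanti : ∀ x l v, V (l + v) x ≤ V l x)
    (hlip : ∀ x x' l, V l x' ≤ V l x + 6 * (2 ^ l * |e x' - e x|))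
    (hκ : Tendsto κ atTop (𝓝 0))
    (hkey : ∀ x x' L w v, 1 ≤ w → 2 ^ L * |e x' - e x| < 1 / 2 ^ w →
      2 ^ L * |e x' - e x| * (V L x - κ w) ≤
        √(V L x - V (L + v) x) + √(V L x' - V (L + v) x') + 2 / 2 ^ v)
    (hc : 0 < c) (hlow : ∀ x l, c ≤ V l x) : (range e).Countable := by
  obtain ⟨w, hw1, hw⟩ : ∃ w, 1 ≤ w ∧ κ w ≤ c / 2 :=
    ((eventually_ge_atTop 1).and (hκ.eventually_le_const (half_pos hc))).exists
  set c₀ : ℝ := (1 / 2) ^ (w + 2) * (c / 2) with hc₀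
  have hc₀p : 0 < c₀ := by positivity
  obtain ⟨v, hv⟩ : ∃ v : ℕ, 2 / 2 ^ v ≤ c₀ / 3 := by
    obtain ⟨v, hv⟩ := exists_pow_lt_of_lt_one (show (0 : ℝ) < c₀ / 6 by positivity)
      (show (1 / 2 : ℝ) < 1 by norm_num)
    refine ⟨v, ?_⟩
    rw [one_div, inv_pow] at hv
    rw [div_eq_mul_inv]; linarith
  set η : ℝ := c₀ ^ 2 / 36 with hη
  have hηp : 0 < η := by positivity
  have hbdd : ∀ x, BddBelow (range fun l => V l x) := fun x => ⟨c, by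
    rintro _ ⟨l, rfl⟩; exact hlow x l⟩
  refine countable_range_of_locally_drop (W := fun x => ⨅ l, V l x) hηp fun x => ?_
  have hW : ∀ x l, (⨅ l, V l x) ≤ V l x := fun x l => ciInf_le (hbdd x) l
  obtain ⟨l, hl⟩ := exists_lt_of_ciInf_lt (lt_add_of_pos_right (⨅ l, V l x) hηp)
  have h2l : (0 : ℝ) < 2 ^ l := by positivity
  refine ⟨min (η / (6 * 2 ^ l)) ((1 / 2) ^ (w + 1) / 2 ^ l), by positivity, fun x' hne hD => ?_⟩
  set D := |e x' - e x| with hDdef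
  have hD0 : 0 < D := abs_pos.2 (sub_ne_zero.2 hne)
  have hD1 : 6 * (2 ^ l * D) ≤ η := by
    have := (lt_min_iff.1 hD).1.le
    rw [le_div_iff₀ (by positivity)] at this; linarith
  have hD2 : D * 2 ^ l ≤ (1 / 2) ^ (w + 1) := by
    have := (lt_min_iff.1 hD).2.le
    rwa [le_div_iff₀ (by positivity)] at this
  obtain ⟨j, hj1, hj2⟩ := exists_nat_pow_near (x := (1 / 2 : ℝ) ^ (w + 1) / (D * 2 ^ l)) (y := 2)
    ((one_le_div (by positivity)).2 hD2) (by norm_num)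
  rw [le_div_iff₀ (by positivity)] at hj1
  rw [div_lt_iff₀ (by positivity)] at hj2
  have hL1 : 2 ^ (l + j) * D ≤ (1 / 2) ^ (w + 1) := by rw [pow_add]; linarith
  have hL2 : (1 / 2) ^ (w + 2) < 2 ^ (l + j) * D := by
    rw [pow_succ (1 / 2 : ℝ) (w + 1)]; rw [pow_succ (2 : ℝ)] at hj2
    rw [pow_add (2 : ℝ)]; linarith
  have hlt : 2 ^ (l + j) * D < 1 / 2 ^ w := by
    refine hL1.trans_lt ?_
    rw [pow_succ, one_div, inv_pow, one_div]
    have : (0 : ℝ) < (2 ^ w)⁻¹ := by positivity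
    linarith
  by_contra! hcon
  have hk := hkey x x' (l + j) w v hw1 hlt
  have hs1 : √(V (l + j) x - V (l + j + v) x) ≤ c₀ / 6 := by
    apply Real.sqrt_le_iff.2 ⟨by positivity, ?_⟩
    have := hanti x l j
    have := hW x (l + j + v)
    have : (c₀ / 6) ^ 2 = η := by rw [hη]; ring
    linarith
  have hs2 : √(V (l + j) x' - V (l + j + v) x') ≤ c₀ / 3 := by
    apply Real.sqrt_le_iff.2 ⟨by positivity, ?_⟩
    have := hanti x' l j
    have := hW x' (l + j + v)
    have := hlip x x' l
    have : (c₀ / 3) ^ 2 = 4 * η := by rw [hη]; ring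
    linarith
  have hlo : c₀ ≤ 2 ^ (l + j) * D * (V (l + j) x - κ w) := by
    have := hlow x (l + j)
    exact mul_le_mul hL2.le (by linarith) (by positivity) (by positivity)
  linarith

theorem tendsto_projHomogeneous_error {C s : ℝ} (hs : s < 1) :
    Tendsto (fun w : ℕ => C * (2 * 2 ^ w) ^ s * (3 * (2 * (3 / 2 ^ w)))) atTop (𝓝 0) := by
  have h1 : (fun w : ℕ => C * (2 * 2 ^ w : ℝ) ^ s * (3 * (2 * (3 / 2 ^ w)))) =
      fun w : ℕ => (C * 2 ^ s * 18) * ((2 : ℝ) ^ (s - 1)) ^ w := by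
    funext w
    have h2 : ((2 : ℝ) ^ w) ^ s = ((2 : ℝ) ^ s) ^ w := by
      rw [← Real.rpow_natCast, ← Real.rpow_natCast, ← Real.rpow_mul (by norm_num),
        ← Real.rpow_mul (by norm_num), mul_comm]
    rw [Real.mul_rpow (by norm_num) (by positivity), h2, Real.rpow_sub_one (by norm_num), div_pow]
    ring
  rw [h1]
  have h3 : (2 : ℝ) ^ (s - 1) < 1 := Real.rpow_lt_one_of_one_lt_of_neg (by norm_num) (by linarith)
  simpa using (tendsto_pow_atTop_nhds_zero_of_lt_one (by positivity) h3).const_mul (C * 2 ^ s * 18)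

/-- Along an ultrafilter, the directions in which the configurations `P n` have homogeneous
projections of exponent below their dimension form a countable set. -/
theorem countable_range_of_projHomogeneous {ι : Type*} {U : Ultrafilter ℕ}
    (hU : (U : Filter ℕ) ≤ atTop) {b : ℕ} {P : ℕ → Finset (ℝ × ℝ)} {C s d : ℝ} (hb : 2 ≤ b)
    (hC : 0 < C) (hs : s < 1) (hgap : Real.log 24 < (d - s) * Real.log b)
    (hPr : ∀ n, ∀ p ∈ P n, |p.1| ≤ 1 ∧ 0 ≤ p.2 ∧ p.2 < 1)
    (hsep : ∀ n, ∀ p ∈ P n, ∀ q ∈ P n, p ≠ q →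
      1 ≤ 8 * (b : ℝ) ^ n * |p.1 - q.1| ∨ 1 ≤ 8 * (b : ℝ) ^ n * |p.2 - q.2|)
    (hcard : ∀ n, ((b : ℝ) ^ n) ^ d ≤ (P n).card)
    {ε : ℕ → ι → ℝ} {e : ι → ℝ} (he : ∀ x, Tendsto (fun n => ε n x) U (𝓝 (e x)))
    (hHom : ∀ x, ∀ᶠ n in U, ProjHomogeneous b n (P n) C s (ε n x)) : (range e).Countable := by
  have hlim : ∀ l x, ∃ V : ℝ, Tendsto (fun n => condVar b n (P n) (ε n x) l) U (𝓝 V) := by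
    intro l x
    obtain ⟨V, -, hV⟩ := (isCompact_Icc (a := (0 : ℝ)) (b := 1)).ultrafilter_le_nhds
      (U.map fun n => condVar b n (P n) (ε n x) l)
      (by
        rw [le_principal_iff]
        exact Filter.mem_map.2 (Eventually.of_forall fun n => ⟨condVar_nonneg, condVar_le_one⟩))
    exact ⟨V, hV⟩
  choose V hV using hlim
  have hnat : Tendsto (fun n : ℕ => n) U atTop := hU
  have hpow : ∀ L : ℕ, Tendsto (fun n : ℕ => (2 : ℝ) ^ L / 2 ^ n) U (𝓝 0) := fun L =>
    ((tendsto_pow_atTop_atTop_of_one_lt (one_lt_two)).comp hnat).const_div_atTop _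
  have hinv : ∀ c : ℝ, Tendsto (fun n : ℕ => c / (n : ℝ)) U (𝓝 0) := fun c =>
    (tendsto_natCast_atTop_atTop.comp hnat).const_div_atTop _
  have hdist : ∀ x x' (L : ℕ), Tendsto (fun n => 2 ^ L * |ε n x' - ε n x|) U
      (𝓝 (2 ^ L * |e x' - e x|)) := fun x x' L => (((he x').sub (he x)).abs).const_mul _
  have hb1 : (1 : ℝ) < b := by exact_mod_cast hb
  have hlog : 0 < Real.log (2 * b) := Real.log_pos (by linarith)
  refine countable_range_of_energy (V := V)
    (c := ((d - s) * Real.log b - Real.log 24) / (Real.log (2 * b) * b ^ 2))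
    ?_ ?_ (tendsto_projHomogeneous_error (C := C) hs) ?_
    (div_pos (by linarith) (by positivity)) ?_
  · exact fun x l v => le_of_tendsto_of_tendsto' (hV _ x) (hV _ x) fun n => condVar_antitone v
  · intro x x' l
    have h := (hV l x).add ((((hdist x x' l).const_mul 2).add (hpow l)).const_mul 3)
    have := le_of_tendsto_of_tendsto' (hV l x') h fun n => condVar_le_add (ε n x) (ε n x')
    linarith
  · intro x x' L w v hw hlt
    have hl := (hdist x x' L).mul ((hV L x).sub
      ((((tendsto_const_nhds (x := 2 * (3 / (2 : ℝ) ^ w))).add (hpow L)).const_mul 3).const_mul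
        (C * (2 * 2 ^ w) ^ s) |>.add (hinv ((L + w : ℕ) : ℝ))))
    have hr := ((((hV L x).sub (hV (L + v) x)).sqrt).add
      (((hV L x').sub (hV (L + v) x')).sqrt)).add_const (2 / 2 ^ v)
    have := le_of_tendsto_of_tendsto hl hr (by
      filter_upwards [hHom x, (hdist x x' L).eventually_lt_const hlt] with n hn hlt
      exact mul_condVar_sub_le hb hn hC.le hw v hlt.le)
    simpa using this
  · intro x l
    have h := ((((hinv (Real.log (C * (1 + (|e x| + 1)) ^ s) + Real.log (19 * (35 + 16 * (|e x| + 1)))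
      + (l + 1) * Real.log (2 * b))).const_sub ((d - s) * Real.log b - Real.log 24)))).div_const
        (Real.log (2 * b) * b ^ 2)
    rw [sub_zero] at h
    refine le_of_tendsto_of_tendsto h (hV l x) ?_
    filter_upwards [hHom x, hnat.eventually_gt_atTop 0,
      (he x).abs.eventually_lt_const (lt_add_one |e x|)] with n hn hn0 hle
    exact le_condVar hb hn0 hC (by positivity) hle.le (hPr n) (hsep n) (hcard n) hn l

/-! ### Assouad covering bounds -/

section Assouad

variable {X : Type*} [PseudoMetricSpace X] {E : Set X} {C C' α β d Q R R₀ : ℝ}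

/-- Every ball of radius `R` in `E` is covered by `C (R / r) ^ α` sets of diameter `r`. -/
def AssouadBound (E : Set X) (C α : ℝ) : Prop :=
  ∀ x ∈ E, ∀ r R : ℝ, 0 < r → r < R →
    ∃ 𝒰 : Finset (Set X), (E ∩ closedBall x R ⊆ ⋃ U ∈ 𝒰, U) ∧
      (∀ U ∈ 𝒰, ediam U ≤ ENNReal.ofReal r) ∧
      ((𝒰.card : ℝ) ≤ C * (R / r) ^ α)

theorem AssouadBound.mono (h : AssouadBound E C α) (hC : C ≤ C') (hC' : 0 ≤ C') (hα : α ≤ β) :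
    AssouadBound E C' β := by
  intro x hx r R hr hrR
  obtain ⟨𝒰, h1, h2, h3⟩ := h x hx r R hr hrR
  refine ⟨𝒰, h1, h2, h3.trans ?_⟩
  have h1r : 1 ≤ R / r := (one_le_div hr).2 hrR.le
  have : 0 ≤ (R / r) ^ α := by positivity
  calc C * (R / r) ^ α ≤ C' * (R / r) ^ α := by gcongr
    _ ≤ C' * (R / r) ^ β := by gcongr

theorem exists_finset_cover_of_card_separated_lt (hQ : 0 < Q) (hR : 0 < R) {z : X}
    (h : ∀ S : Finset X, (S : Set X) ⊆ E ∩ closedBall z R →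
      (∀ p ∈ S, ∀ q ∈ S, p ≠ q → R / Q < dist p q) → (S.card : ℝ) < Q ^ d) :
    ∃ S : Finset X, (S : Set X) ⊆ E ∧ (S.card : ℝ) ≤ Q ^ d ∧
      E ∩ closedBall z R ⊆ ⋃ p ∈ S, closedBall p (R / Q) := by
  classical
  let A : ℕ → Prop := fun m => ∃ S : Finset X, (S : Set X) ⊆ E ∩ closedBall z R ∧
      (∀ p ∈ S, ∀ q ∈ S, p ≠ q → R / Q < dist p q) ∧ S.card = m
  have hN : ∀ m, A m → m ≤ ⌈Q ^ d⌉₊ := by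
    rintro m ⟨S, h1, h2, rfl⟩
    exact_mod_cast (h S h1 h2).le.trans (Nat.le_ceil _)
  have hA : A 0 := ⟨∅, by simp⟩
  obtain ⟨S, h1, h2, h3⟩ := Nat.findGreatest_spec (P := A) (hN 0 hA) hA
  refine ⟨S, h1.trans inter_subset_left, (h S h1 h2).le, fun y hy => ?_⟩
  by_contra hcon
  simp only [mem_iUnion, mem_closedBall, not_exists, not_le] at hcon
  have hyS : y ∉ S := fun hy' => by
    have := hcon y hy'
    rw [dist_self] at this
    exact absurd this (not_lt.2 (by positivity))
  have hins : A (S.card + 1) := by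
    refine ⟨insert y S, ?_, ?_, Finset.card_insert_of_notMem hyS⟩
    · rw [Finset.coe_insert]; exact insert_subset hy h1
    · intro p hp q hq hpq
      rcases Finset.mem_insert.1 hp with rfl | hp' <;>
        rcases Finset.mem_insert.1 hq with rfl | hq'
      · exact absurd rfl hpq
      · exact hcon q hq'
      · rw [dist_comm]; exact hcon p hp'
      · exact h2 p hp' q hq' hpq
  have := Nat.le_findGreatest (hN _ hins) hins
  omega

theorem exists_finset_cover_iterate (hQ : 0 < Q) (hQ1 : 1 ≤ Q)
    (h : ∀ z ∈ E, ∀ R, 0 < R → R ≤ R₀ → ∃ S : Finset X, (S : Set X) ⊆ E ∧ (S.card : ℝ) ≤ Q ^ d ∧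
      E ∩ closedBall z R ⊆ ⋃ p ∈ S, closedBall p (R / Q)) (j : ℕ) {z : X} (hz : z ∈ E)
    (hR : 0 < R) (hR₀ : R ≤ R₀) :
    ∃ S : Finset X, (S : Set X) ⊆ E ∧ (S.card : ℝ) ≤ (Q ^ j) ^ d ∧
      E ∩ closedBall z R ⊆ ⋃ p ∈ S, closedBall p (R / Q ^ j) := by
  classical
  induction j with
  | zero => exact ⟨{z}, by simpa using hz, by simp, by simp⟩
  | succ j ih =>
    obtain ⟨S, h1, h2, h3⟩ := ih
    have hj : R / Q ^ j ≤ R₀ := (div_le_self hR.le (one_le_pow₀ hQ1)).trans hR₀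
    choose! T hT1 hT2 hT3 using fun p (hp : p ∈ S) => h p (h1 hp) (R / Q ^ j) (by positivity) hj
    refine ⟨S.biUnion T, ?_, ?_, ?_⟩
    · intro y hy
      obtain ⟨p, hp, hy⟩ := Finset.mem_biUnion.1 (Finset.mem_coe.1 hy)
      exact hT1 p hp hy
    · have : ((S.biUnion T).card : ℝ) ≤ ∑ p ∈ S, ((T p).card : ℝ) := by
        exact_mod_cast Finset.card_biUnion_le
      refine this.trans ((Finset.sum_le_card_nsmul _ _ _ hT2).trans ?_)
      rw [nsmul_eq_mul, pow_succ, Real.mul_rpow (by positivity) hQ.le]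
      gcongr
    · intro y hy
      obtain ⟨p, hp, hyp⟩ := mem_iUnion₂.1 (h3 hy)
      obtain ⟨q, hq, hyq⟩ := mem_iUnion₂.1 (hT3 p hp ⟨hy.1, hyp⟩)
      refine mem_iUnion₂.2 ⟨q, Finset.mem_biUnion.2 ⟨p, hp, hq⟩, ?_⟩
      rwa [div_div, ← pow_succ] at hyq

theorem ediam_closedBall_half_le {p : X} {r : ℝ} :
    ediam (closedBall p (r / 2)) ≤ ENNReal.ofReal r := by
  refine Metric.ediam_le fun x hx y hy => ?_
  rw [edist_dist]
  refine ENNReal.ofReal_le_ofReal ?_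
  have := dist_triangle_right x y p
  rw [mem_closedBall] at hx hy
  linarith

/-- A totally bounded set without an Assouad bound of exponent `d` contains, at arbitrarily small
scales, separated families with `Q ^ d` members. -/
theorem exists_separated_of_not_assouadBound (hE : TotallyBounded E) (hd : 0 ≤ d)
    (h : ∀ C, 0 < C → ¬ AssouadBound E C d) (hQ : 1 < Q) (hR₀ : 0 < R₀) :
    ∃ z ∈ E, ∃ R, 0 < R ∧ R ≤ R₀ ∧ ∃ S : Finset X, (S : Set X) ⊆ E ∩ closedBall z R ∧
      Q ^ d ≤ S.card ∧ ∀ p ∈ S, ∀ q ∈ S, p ≠ q → R / Q < dist p q := by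
  classical
  by_contra! hcon
  have hQ0 : 0 < Q := by linarith
  have hone : ∀ z ∈ E, ∀ R, 0 < R → R ≤ R₀ → ∃ S : Finset X, (S : Set X) ⊆ E ∧
      (S.card : ℝ) ≤ Q ^ d ∧ E ∩ closedBall z R ⊆ ⋃ p ∈ S, closedBall p (R / Q) := by
    intro z hz R hR hRR
    refine exists_finset_cover_of_card_separated_lt hQ0 hR fun S hS hsep => ?_
    by_contra! hle
    obtain ⟨p, hp, q, hq, hne, hlt⟩ := hcon z hz R hR hRR S hS hle
    exact absurd (hsep p hp q hq hne) (not_lt.2 hlt)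
  have hcov : ∀ z ∈ E, ∀ R r y, 0 < R → R ≤ R₀ → 0 < r → 1 ≤ y → 2 * R / r ≤ y →
      ∃ S : Finset X, (S.card : ℝ) ≤ (Q * y) ^ d ∧
        E ∩ closedBall z R ⊆ ⋃ p ∈ S, closedBall p (r / 2) := by
    intro z hz R r y hR hRR hr hy hRy
    obtain ⟨j, hj1, hj2⟩ := exists_nat_pow_near hy hQ
    obtain ⟨S, -, h2, h3⟩ := exists_finset_cover_iterate hQ0 hQ.le hone (j + 1) hz hR hRR
    refine ⟨S, h2.trans ?_, h3.trans (iUnion₂_mono fun p _ => closedBall_subset_closedBall ?_)⟩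
    · refine Real.rpow_le_rpow (by positivity) ?_ hd
      rw [pow_succ, mul_comm]; gcongr
    · rw [div_le_iff₀ (by positivity)]
      have := (div_le_iff₀ hr).1 (hRy.trans hj2.le)
      linarith
  obtain ⟨t, htE, htf, ht⟩ := hE.exists_subset (Metric.dist_mem_uniformity hR₀)
  set T := htf.toFinset
  have hQd : 0 < (2 * Q) ^ d := by positivity
  refine h ((T.card + 1) * (2 * Q) ^ d) (by positivity) fun x hx r R hr hrR => ?_
  have hRr : 1 ≤ 2 * R / r := (one_le_div hr).2 (by linarith)
  have hrew : (Q * (2 * R / r)) ^ d = (2 * Q) ^ d * (R / r) ^ d := by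
    have : 0 < R / r := div_pos (hr.trans hrR) hr
    rw [← Real.mul_rpow (by positivity) this.le]; ring_nf
  have hfin : ∃ S : Finset X, (S.card : ℝ) ≤ (T.card + 1) * (2 * Q) ^ d * (R / r) ^ d ∧
      E ∩ closedBall x R ⊆ ⋃ p ∈ S, closedBall p (r / 2) := by
    have hpos : 0 ≤ (2 * Q) ^ d * (R / r) ^ d := by
      have : 0 < R / r := div_pos (hr.trans hrR) hr
      positivity
    rcases le_or_gt R R₀ with hRR | hRR
    · obtain ⟨S, h1, h2⟩ := hcov x hx R r _ (hr.trans hrR) hRR hr hRr le_rfl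
      refine ⟨S, h1.trans ?_, h2⟩
      rw [hrew, mul_assoc]
      exact le_mul_of_one_le_left hpos (by simp)
    · choose! S hS1 hS2 using fun z (hz : z ∈ T) => hcov z (htE (htf.mem_toFinset.1 hz)) R₀ r
        (2 * R / r) hR₀ le_rfl hr hRr (by gcongr)
      refine ⟨T.biUnion S, ?_, ?_⟩
      · have : ((T.biUnion S).card : ℝ) ≤ ∑ p ∈ T, ((S p).card : ℝ) := by
          exact_mod_cast Finset.card_biUnion_le
        refine this.trans ((Finset.sum_le_card_nsmul _ _ _ hS1).trans ?_)
        rw [nsmul_eq_mul, hrew, mul_assoc]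
        gcongr
        linarith
      · rintro y ⟨hy, -⟩
        obtain ⟨z, hz, hyz⟩ := mem_iUnion₂.1 (ht hy)
        have hzT : z ∈ T := htf.mem_toFinset.2 hz
        obtain ⟨p, hp, hyp⟩ := mem_iUnion₂.1 (hS2 z hzT ⟨hy, mem_closedBall.2 (le_of_lt hyz)⟩)
        exact mem_iUnion₂.2 ⟨p, Finset.mem_biUnion.2 ⟨z, hzT, hp⟩, hyp⟩
  obtain ⟨S, h1, h2⟩ := hfin
  refine ⟨S.image fun p => closedBall p (r / 2), ?_, ?_, le_trans ?_ h1⟩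
  · simpa using h2
  · simp only [Finset.mem_image]
    rintro _ ⟨p, -, rfl⟩
    exact ediam_closedBall_half_le
  · exact_mod_cast Finset.card_image_le

end Assouad

theorem exists_assouadBound_of_isBounded {E : Set (Euc 2)} (hE : Bornology.IsBounded E) :
    ∃ C, 0 < C ∧ AssouadBound E C 5 := by
  classical
  by_contra! hcon
  obtain ⟨z, -, R, hR, -, S, h1, h2, h3⟩ := exists_separated_of_not_assouadBound (Q := 2)
    (hE.isCompact_closure.totallyBounded.subset subset_closure) (by norm_num) hcon (by norm_num) one_pos
  have hinj : Function.Injective fun p : Euc 2 => (2 / R) • (p - z) := fun p q hpq => by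
    have := smul_right_injective (Euc 2) (by positivity : (2 / R : ℝ) ≠ 0) hpq
    simpa using this
  have hcard := Besicovitch.card_le_of_separated (S.image fun p => (2 / R) • (p - z))
    (by
      simp only [Finset.mem_image]
      rintro _ ⟨p, hp, rfl⟩
      have := (h1 hp).2
      rw [mem_closedBall, dist_eq_norm] at this
      rw [norm_smul, Real.norm_of_nonneg (by positivity), div_mul_eq_mul_div, div_le_iff₀ hR]
      linarith)
    (by
      simp only [Finset.mem_image]
      rintro _ ⟨p, hp, rfl⟩ _ ⟨q, hq, rfl⟩ hne
      have := h3 p hp q hq (fun hpq => hne (by rw [hpq]))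
      rw [dist_eq_norm] at this
      rw [← smul_sub, sub_sub_sub_cancel_right, norm_smul, Real.norm_of_nonneg (by positivity),
        div_mul_eq_mul_div, le_div_iff₀ hR]
      linarith)
  rw [Finset.card_image_of_injective _ hinj, finrank_euclideanSpace_fin] at hcard
  have : (S.card : ℝ) ≤ 25 := by exact_mod_cast hcard
  have h32 : ((2 : ℝ) ^ (5 : ℝ)) = 32 := by norm_num
  linarith

/-! ### Radial projections in the plane -/

/-- The determinant of two planar vectors. -/
def planeCross (u v : Euc 2) : ℝ := u 0 * v 1 - u 1 * v 0

theorem planeNorm_sq (u : Euc 2) : ‖u‖ ^ 2 = u 0 ^ 2 + u 1 ^ 2 := by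
  rw [EuclideanSpace.norm_sq_eq, Fin.sum_univ_two, Real.norm_eq_abs, Real.norm_eq_abs, sq_abs,
    sq_abs]

theorem planeInner (u v : Euc 2) : inner ℝ u v = u 0 * v 0 + u 1 * v 1 := by
  simp [PiLp.inner_apply, Fin.sum_univ_two, mul_comm]

theorem inner_sq_add_planeCross_sq (u v : Euc 2) :
    inner ℝ u v ^ 2 + planeCross u v ^ 2 = (‖u‖ * ‖v‖) ^ 2 := by
  rw [mul_pow, planeNorm_sq, planeNorm_sq, planeInner, planeCross]; ring

theorem abs_planeCross_le (u v : Euc 2) : |planeCross u v| ≤ ‖u‖ * ‖v‖ := by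
  refine abs_le_of_sq_le_sq ?_ (by positivity)
  nlinarith [inner_sq_add_planeCross_sq u v, sq_nonneg (inner ℝ u v)]

theorem norm_unit_sub_sq {u v : Euc 2} (hu : 0 < ‖u‖) (hv : 0 < ‖v‖) :
    ‖‖u‖⁻¹ • u - ‖v‖⁻¹ • v‖ ^ 2 = 2 - 2 * (inner ℝ u v / (‖u‖ * ‖v‖)) := by
  rw [norm_sub_sq_real, norm_smul, norm_smul, real_inner_smul_left, real_inner_smul_right]
  simp only [norm_inv, norm_norm]
  field_simp
  ring

theorem norm_mul_norm_unit_sub_le {u v : Euc 2} (hu : 0 < ‖u‖) (hv : 0 < ‖v‖)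
    (h : 0 ≤ inner ℝ u v) :
    ‖u‖ * ‖v‖ * ‖‖u‖⁻¹ • u - ‖v‖⁻¹ • v‖ ≤ 2 * |planeCross u v| := by
  refine (sq_le_sq₀ (by positivity) (by positivity)).1 ?_
  have h1 := inner_sq_add_planeCross_sq u v
  have h2 := norm_unit_sub_sq hu hv
  have h3 : inner ℝ u v ≤ ‖u‖ * ‖v‖ := real_inner_le_norm u v
  have huv : 0 < ‖u‖ * ‖v‖ := mul_pos hu hv
  rw [mul_pow, h2, mul_pow 2, sq_abs]
  have h4 : (‖u‖ * ‖v‖) ^ 2 * (2 - 2 * (inner ℝ u v / (‖u‖ * ‖v‖))) =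
      2 * (‖u‖ * ‖v‖) ^ 2 - 2 * (inner ℝ u v * (‖u‖ * ‖v‖)) := by
    field_simp
  rw [h4]
  nlinarith [mul_nonneg h (sub_nonneg.2 h3), sq_nonneg (planeCross u v)]

theorem abs_planeCross_le_norm_unit_sub {u v : Euc 2} (hu : 0 < ‖u‖) (hv : 0 < ‖v‖) :
    |planeCross u v| ≤ ‖u‖ * ‖v‖ * ‖‖u‖⁻¹ • u - ‖v‖⁻¹ • v‖ := by
  refine abs_le_of_sq_le_sq ?_ (by positivity)
  have h1 := inner_sq_add_planeCross_sq u v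
  have h2 := norm_unit_sub_sq hu hv
  have huv : 0 < ‖u‖ * ‖v‖ := mul_pos hu hv
  rw [mul_pow, h2]
  have h4 : (‖u‖ * ‖v‖) ^ 2 * (2 - 2 * (inner ℝ u v / (‖u‖ * ‖v‖))) =
      2 * (‖u‖ * ‖v‖) ^ 2 - 2 * (inner ℝ u v * (‖u‖ * ‖v‖)) := by
    field_simp
  rw [h4]
  nlinarith [sq_nonneg (‖u‖ * ‖v‖ - inner ℝ u v)]

theorem radialProj_of_ne {x X : Euc 2} (h : X ≠ x) :
    radialProj x X = ‖X - x‖⁻¹ • (X - x) + x := by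
  simp [radialProj, h]

/-- The coordinates of a point of `closedBall z R` rescaled to the unit square. -/
def rescale (z : Euc 2) (R : ℝ) (X : Euc 2) : ℝ × ℝ :=
  ((X 0 - z 0) / (4 * R) + 1 / 2, (X 1 - z 1) / (4 * R) + 1 / 2)

/-- The slope of the linear projection approximating the radial projection from `x` near `z`. -/
def projSlope (z x : Euc 2) : ℝ := -(z 0 - x 0) / (z 1 - x 1)

/-- The rescaled linear projection along the direction from `x` to `z`. -/
def slopeProj (z x : Euc 2) (R : ℝ) (X : Euc 2) : ℝ :=
  (rescale z R X).1 + projSlope z x * (rescale z R X).2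

theorem planeCross_sub_eq {z x : Euc 2} {R : ℝ} (hR : 0 < R) (hz : z 1 ≠ x 1) (X Y : Euc 2) :
    planeCross (X - Y) (z - x) =
      4 * R * (z 1 - x 1) * (slopeProj z x R X - slopeProj z x R Y) := by
  have : z 1 - x 1 ≠ 0 := sub_ne_zero.2 hz
  simp only [planeCross, slopeProj, rescale, projSlope, PiLp.sub_apply]
  field_simp
  ring

theorem planeCross_sub_sub (z x X Y : Euc 2) :
    planeCross (X - x) (Y - x) =
      planeCross (X - Y) (z - x) + planeCross (X - z) (Y - z) := by
  simp only [planeCross, PiLp.sub_apply]; ring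

section Local

variable {z x X Y : Euc 2} {R c M : ℝ}

theorem norm_sub_bounds (hM : ‖z - x‖ + c ≤ M) (hzc : c ≤ ‖z - x‖) (hRc : 4 * R ≤ c) (hc : 0 < c)
    (hX : dist X z ≤ R) : c / 2 ≤ ‖X - x‖ ∧ ‖X - x‖ ≤ M := by
  rw [dist_eq_norm] at hX
  have h1 : ‖X - x‖ ≤ ‖X - z‖ + ‖z - x‖ := norm_sub_le_norm_sub_add_norm_sub X z x
  have h2 : ‖z - x‖ ≤ ‖z - X‖ + ‖X - x‖ := norm_sub_le_norm_sub_add_norm_sub z X x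
  rw [norm_sub_rev z X] at h2
  constructor <;> linarith

theorem inner_sub_nonneg (hzc : c ≤ ‖z - x‖) (hRc : 4 * R ≤ c)
    (hX : dist X z ≤ R) (hY : dist Y z ≤ R) : 0 ≤ inner ℝ (X - x) (Y - x) := by
  rw [dist_eq_norm] at hX hY
  have e1 : X - x = (z - x) + (X - z) := by abel
  have e2 : Y - x = (z - x) + (Y - z) := by abel
  rw [e1, e2, inner_add_left, inner_add_right, inner_add_right, real_inner_self_eq_norm_sq]
  have h1 := abs_le.1 (abs_real_inner_le_norm (z - x) (Y - z))
  have h2 := abs_le.1 (abs_real_inner_le_norm (X - z) (z - x))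
  have h3 := abs_le.1 (abs_real_inner_le_norm (X - z) (Y - z))
  have hR : 0 ≤ R := (norm_nonneg _).trans hX
  have g1 : ‖z - x‖ * ‖Y - z‖ ≤ ‖z - x‖ * (‖z - x‖ / 4) := by gcongr; linarith
  have g2 : ‖X - z‖ * ‖z - x‖ ≤ (‖z - x‖ / 4) * ‖z - x‖ := by gcongr; linarith
  have g3 : ‖X - z‖ * ‖Y - z‖ ≤ (‖z - x‖ / 4) * (‖z - x‖ / 4) := by gcongr <;> linarith
  nlinarith [sq_nonneg ‖z - x‖]

theorem abs_planeCross_local_le (hR : 0 ≤ R) (hX : dist X z ≤ R) (hY : dist Y z ≤ R) :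
    |planeCross (X - z) (Y - z)| ≤ R * R := by
  rw [dist_eq_norm] at hX hY
  exact (abs_planeCross_le _ _).trans (by gcongr)

/-- The radial projection is controlled by the linear projection. -/
theorem dist_radialProj_le (hM : ‖z - x‖ + c ≤ M) (hzc : c ≤ |z 1 - x 1|) (hRc : 4 * R ≤ c)
    (hc : 0 < c) (hR : 0 < R) (hX : dist X z ≤ R) (hY : dist Y z ≤ R) {ρ : ℝ} (hρ : R ≤ ρ)
    (h : |slopeProj z x R X - slopeProj z x R Y| ≤ 2 * ρ) :
    dist (radialProj x X) (radialProj x Y) ≤ 8 * (8 * M + 1) / c ^ 2 * (R * ρ) := by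
  have hzM : |z 1 - x 1| ≤ ‖z - x‖ := by simpa using PiLp.norm_apply_le (z - x) 1
  have hzc' := hzc.trans hzM
  have hz1 : z 1 ≠ x 1 := fun hh => by rw [hh, sub_self, abs_zero] at hzc; linarith
  have hM0 : 0 < M := by linarith
  obtain ⟨hX1, -⟩ := norm_sub_bounds hM hzc' hRc hc hX
  obtain ⟨hY1, -⟩ := norm_sub_bounds hM hzc' hRc hc hY
  have hXp : 0 < ‖X - x‖ := by linarith
  have hYp : 0 < ‖Y - x‖ := by linarith
  have hXx : X ≠ x := fun hh => by simp [hh] at hXp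
  have hYx : Y ≠ x := fun hh => by simp [hh] at hYp
  rw [radialProj_of_ne hXx, radialProj_of_ne hYx, dist_add_right, dist_eq_norm]
  have h1 := norm_mul_norm_unit_sub_le hXp hYp (inner_sub_nonneg hzc' hRc hX hY)
  have h2 : |planeCross (X - x) (Y - x)| ≤ (8 * M + 1) * (R * ρ) := by
    rw [planeCross_sub_sub z, planeCross_sub_eq hR hz1]
    refine (abs_add_le _ _).trans ?_
    rw [abs_mul, abs_mul, abs_of_pos (by positivity : 0 < 4 * R)]
    have g1 : 4 * R * |z 1 - x 1| * |slopeProj z x R X - slopeProj z x R Y| ≤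
        4 * R * M * (2 * ρ) := by
      gcongr
      linarith
    have g2 := (abs_planeCross_local_le hR.le hX hY).trans (mul_le_mul_of_nonneg_left hρ hR.le)
    linarith
  set D := ‖‖X - x‖⁻¹ • (X - x) - ‖Y - x‖⁻¹ • (Y - x)‖
  have h3 : c / 2 * (c / 2) * D ≤ ‖X - x‖ * ‖Y - x‖ * D := by gcongr
  rw [div_mul_eq_mul_div, le_div_iff₀ (by positivity)]
  nlinarith

/-- The linear projection is controlled by the radial projection. -/
theorem abs_slopeProj_sub_le (hM : ‖z - x‖ + c ≤ M) (hzc : c ≤ |z 1 - x 1|) (hRc : 4 * R ≤ c)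
    (hc : 0 < c) (hR : 0 < R) (hX : dist X z ≤ R) (hY : dist Y z ≤ R) {ρ : ℝ} (hρ : R ≤ c * ρ)
    (h : dist (radialProj x X) (radialProj x Y) ≤ c / M ^ 2 * (R * ρ)) :
    |slopeProj z x R X - slopeProj z x R Y| ≤ ρ := by
  have hzM : |z 1 - x 1| ≤ ‖z - x‖ := by simpa using PiLp.norm_apply_le (z - x) 1
  have hzc' := hzc.trans hzM
  have hz1 : z 1 ≠ x 1 := fun hh => by rw [hh, sub_self, abs_zero] at hzc; linarith
  obtain ⟨hX1, hX2⟩ := norm_sub_bounds hM hzc' hRc hc hX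
  obtain ⟨hY1, hY2⟩ := norm_sub_bounds hM hzc' hRc hc hY
  have hXp : 0 < ‖X - x‖ := by linarith
  have hYp : 0 < ‖Y - x‖ := by linarith
  have hM0 : 0 < M := by linarith
  have hXx : X ≠ x := fun hh => by simp [hh] at hXp
  have hYx : Y ≠ x := fun hh => by simp [hh] at hYp
  rw [radialProj_of_ne hXx, radialProj_of_ne hYx, dist_add_right, dist_eq_norm] at h
  have h1 := abs_planeCross_le_norm_unit_sub hXp hYp
  have h2 : ‖X - x‖ * ‖Y - x‖ * ‖‖X - x‖⁻¹ • (X - x) - ‖Y - x‖⁻¹ • (Y - x)‖ ≤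
      M * M * (c / M ^ 2 * (R * ρ)) := by gcongr
  have h3 : M * M * (c / M ^ 2 * (R * ρ)) = c * (R * ρ) := by field_simp
  have h4 := (abs_planeCross_local_le hR.le hX hY).trans (mul_le_mul_of_nonneg_left hρ hR.le)
  have h5 := planeCross_sub_sub z x X Y
  rw [planeCross_sub_eq hR hz1] at h5
  have h6 : |4 * R * (z 1 - x 1) * (slopeProj z x R X - slopeProj z x R Y)| ≤
      2 * (c * (R * ρ)) := by
    rw [← sub_eq_iff_eq_add] at h5
    rw [← h5]
    exact (abs_sub _ _).trans (by linarith)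
  rw [abs_mul, abs_mul, abs_of_pos (by positivity : 0 < 4 * R)] at h6
  have h7 : 4 * R * c * |slopeProj z x R X - slopeProj z x R Y| ≤
      4 * R * |z 1 - x 1| * |slopeProj z x R X - slopeProj z x R Y| := by gcongr
  have hRcp : 0 < R * c := by positivity
  have hρ0 : 0 ≤ ρ := by
    by_contra! hneg
    nlinarith
  refine le_of_mul_le_mul_left ?_ hRcp
  nlinarith [mul_nonneg hRcp.le hρ0]

end Local

theorem projHomogeneous_of_assouadBound {F : Set (Euc 2)} {x : Euc 2} {C s c M : ℝ}
    (hB : AssouadBound (radialProj x '' F) C s) (hC : 0 ≤ C) (hc : 0 < c) (hcM : c ≤ M) :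
    ∃ K : ℝ, 0 ≤ K ∧ ∀ (b n : ℕ) (z : Euc 2) (R : ℝ) (P : Finset (ℝ × ℝ)), 0 < b → 0 < R →
      4 * R * (b : ℝ) ^ n ≤ min c 1 → ‖z - x‖ + c ≤ M → c ≤ |z 1 - x 1| →
      (∀ p ∈ P, ∃ X ∈ F, dist X z ≤ R ∧ rescale z R X = p) →
      ProjHomogeneous b n P K s (projSlope z x) := by
  classical
  have hM : 0 < M := by linarith
  set K₂ : ℝ := c / M ^ 2 with hK₂
  set K₁ : ℝ := 8 * (8 * M + 1) / c ^ 2 + K₂ with hK₁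
  have hK₂p : 0 < K₂ := by positivity
  have hK₁p : 0 < K₁ := by positivity
  have hlt : K₂ < K₁ := by rw [hK₁]; exact lt_add_of_pos_left _ (by positivity)
  refine ⟨C * (K₁ / K₂) ^ s, by positivity, ?_⟩
  intro b n z R P hb hR hRb hzM hzc hP t ρ ρ' hρ' hρ
  have hbn : (1 : ℝ) ≤ (b : ℝ) ^ n := one_le_pow₀ (by exact_mod_cast hb)
  have hbn0 : (0 : ℝ) < (b : ℝ) ^ n := by linarith
  have hρ'0 : 0 < ρ' := lt_of_lt_of_le (by positivity) hρ'
  have hρ0 : 0 < ρ := by linarith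
  have hone : 1 ≤ ρ' * (b : ℝ) ^ n := by
    rwa [inv_le_iff_one_le_mul₀ hbn0] at hρ'
  have hRb' : 4 * R ≤ min c 1 := by nlinarith
  have hRc : 4 * R ≤ c := hRb'.trans (min_le_left _ _)
  have hRρ : ∀ a, 0 ≤ a → 4 * R * (b : ℝ) ^ n ≤ a → R ≤ a * ρ' := by
    intro a ha hle
    have h1 : 4 * R * ((b : ℝ) ^ n * ρ') ≤ a * ρ' := by
      rw [← mul_assoc]; gcongr
    nlinarith
  have hR1 : R ≤ c * ρ' := hRρ c hc.le (hRb.trans (min_le_left _ _))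
  have hR2 : R ≤ ρ := by
    have := hRρ 1 zero_le_one (hRb.trans (min_le_right _ _))
    linarith
  rcases ((P.filter fun p => |p.1 + projSlope z x * p.2 - t| ≤ ρ).eq_empty_or_nonempty)
    with hemp | ⟨p₀, hp₀⟩
  · refine ⟨∅, fun p hp hpt => ?_, by simp; positivity⟩
    exact absurd (Finset.mem_filter.2 ⟨hp, hpt⟩) (by rw [hemp]; simp)
  obtain ⟨hp₀P, hp₀t⟩ := Finset.mem_filter.1 hp₀
  obtain ⟨X₀, hX₀F, hX₀, rfl⟩ := hP p₀ hp₀P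
  obtain ⟨𝒰, hcov, hdiam, hcard⟩ := hB (radialProj x X₀) ⟨X₀, hX₀F, rfl⟩ (K₂ * (R * ρ'))
    (K₁ * (R * ρ)) (by positivity) (by
      have : R * ρ' ≤ R * ρ := by gcongr
      exact (mul_le_mul_of_nonneg_left this hK₂p.le).trans_lt (by gcongr))
  let rep : Set (Euc 2) → ℝ := fun V =>
    if h : ∃ X ∈ F, dist X z ≤ R ∧ radialProj x X ∈ V then slopeProj z x R h.choose else 0
  refine ⟨𝒰.image rep, fun p hp hpt => ?_, ?_⟩
  · obtain ⟨X, hXF, hX, rfl⟩ := hP p hp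
    have hclose : |slopeProj z x R X - slopeProj z x R X₀| ≤ 2 * ρ := by
      have := abs_sub_le (slopeProj z x R X) t (slopeProj z x R X₀)
      rw [abs_sub_comm t] at this
      simp only [slopeProj] at this ⊢
      linarith
    have hd := dist_radialProj_le hzM hzc hRc hc hR hX hX₀ hR2 hclose
    have hmem : radialProj x X ∈ ⋃ V ∈ 𝒰, V := hcov ⟨⟨X, hXF, rfl⟩, mem_closedBall.2 <| hd.trans (by
      gcongr; rw [hK₁]; linarith)⟩
    obtain ⟨V, hV, hXV⟩ := mem_iUnion₂.1 hmem
    have hex : ∃ X ∈ F, dist X z ≤ R ∧ radialProj x X ∈ V := ⟨X, hXF, hX, hXV⟩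
    refine ⟨rep V, Finset.mem_image_of_mem _ hV, ?_⟩
    have hrep : rep V = slopeProj z x R hex.choose := dif_pos hex
    obtain ⟨-, hY, hYV⟩ := hex.choose_spec
    rw [hrep]
    refine abs_slopeProj_sub_le hzM hzc hRc hc hR hX hY hR1 ?_
    have := (edist_le_ediam_of_mem hXV hYV).trans (hdiam V hV)
    rw [edist_dist] at this
    exact (ENNReal.ofReal_le_ofReal_iff (by positivity)).1 this
  · calc ((𝒰.image rep).card : ℝ) ≤ 𝒰.card := by exact_mod_cast Finset.card_image_le
      _ ≤ C * (K₁ * (R * ρ) / (K₂ * (R * ρ'))) ^ s := hcard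
      _ = C * (K₁ / K₂) ^ s * (ρ / ρ') ^ s := by
        rw [mul_assoc, ← Real.mul_rpow (by positivity) (by positivity)]
        congr 2
        field_simp

/-! ### The exceptional set -/

theorem dimH_vertical_le (z : Euc 2) : dimH {x : Euc 2 | x 1 = z 1} ≤ 1 := by
  have hf : ContDiff ℝ 1 fun y : ℝ => (!₂[y, z 1] : Euc 2) := by
    rw [contDiff_piLp]
    intro i
    fin_cases i
    · exact contDiff_id
    · exact contDiff_const
  refine (dimH_mono ?_).trans (hf.dimH_range_le.trans (by simp))
  intro x hx
  refine ⟨x 0, ?_⟩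
  ext i
  fin_cases i
  · simp
  · simpa using (show x 1 = z 1 from hx).symm

theorem dimH_slope_le (z : Euc 2) (t : ℝ) :
    dimH {x : Euc 2 | x 1 ≠ z 1 ∧ projSlope z x = t} ≤ 1 := by
  have hf : ContDiff ℝ 1 fun y : ℝ => (!₂[z 0 + t * (z 1 - y), y] : Euc 2) := by
    rw [contDiff_piLp]
    intro i
    fin_cases i
    · exact contDiff_const.add (contDiff_const.mul (contDiff_const.sub contDiff_id))
    · exact contDiff_id
  refine (dimH_mono ?_).trans (hf.dimH_range_le.trans (by simp))
  rintro x ⟨hx, ht⟩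
  refine ⟨x 1, ?_⟩
  have hne : z 1 - x 1 ≠ 0 := sub_ne_zero.2 (Ne.symm hx)
  rw [projSlope, div_eq_iff hne] at ht
  ext i
  fin_cases i
  · simp only [Fin.zero_eta, Matrix.cons_val_zero]
    linarith
  · simp

theorem rescale_injective (z : Euc 2) {R : ℝ} (hR : 0 < R) : Function.Injective (rescale z R) := by
  intro X Y h
  simp only [rescale, Prod.mk.injEq, add_left_inj, div_left_inj' (by positivity : 4 * R ≠ 0),
    sub_left_inj] at h
  ext i
  fin_cases i
  · exact h.1
  · exact h.2

theorem rescale_mem {z X : Euc 2} {R : ℝ} (hR : 0 < R) (hX : dist X z ≤ R) :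
    |(rescale z R X).1| ≤ 1 ∧ 0 ≤ (rescale z R X).2 ∧ (rescale z R X).2 < 1 := by
  rw [dist_eq_norm] at hX
  have key : ∀ i, |(X i - z i) / (4 * R)| ≤ 1 / 4 := by
    intro i
    have h1 : |X i - z i| ≤ ‖X - z‖ := by simpa using PiLp.norm_apply_le (X - z) i
    rw [abs_div, abs_of_pos (by positivity : 0 < 4 * R), div_le_iff₀ (by positivity)]
    linarith
  have h0 := abs_le.1 (key 0)
  have h1 := abs_le.1 (key 1)
  simp only [rescale]
  refine ⟨abs_le.2 ⟨?_, ?_⟩, ?_, ?_⟩ <;> linarith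

theorem rescale_separated {z X Y : Euc 2} {R Q : ℝ} (hR : 0 < R) (hQ : 0 < Q)
    (h : R / Q < dist X Y) :
    1 ≤ 8 * Q * |(rescale z R X).1 - (rescale z R Y).1| ∨
      1 ≤ 8 * Q * |(rescale z R X).2 - (rescale z R Y).2| := by
  have key : ∀ i, |(X i - z i) / (4 * R) + 1 / 2 - ((Y i - z i) / (4 * R) + 1 / 2)| =
      |X i - Y i| / (4 * R) := by
    intro i
    rw [← abs_of_pos (by positivity : 0 < 4 * R), ← abs_div, abs_of_pos (by positivity : 0 < 4 * R)]
    congr 1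
    ring
  simp only [rescale, key]
  by_contra! hcon
  have h0 := hcon.1
  have h1 := hcon.2
  rw [← mul_div_assoc, div_lt_one (by positivity)] at h0 h1
  have hn : dist X Y ≤ |X 0 - Y 0| + |X 1 - Y 1| := by
    rw [dist_eq_norm]
    refine abs_le_of_sq_le_sq' ?_ (by positivity) |>.2
    rw [planeNorm_sq, PiLp.sub_apply, PiLp.sub_apply, ← sq_abs (X 0 - Y 0), ← sq_abs (X 1 - Y 1)]
    nlinarith [mul_nonneg (abs_nonneg (X 0 - Y 0)) (abs_nonneg (X 1 - Y 1))]
  rw [div_lt_iff₀ hQ] at h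
  nlinarith

theorem dimH_assouadBound_radialProj_le {F : Set (Euc 2)} (hne : F.Nonempty)
    (hbd : Bornology.IsBounded F) {s d C : ℝ} (hC : 0 ≤ C) (hs : 0 ≤ s) (hs1 : s < 1) (hsd : s < d)
    (hd : ∀ C, 0 < C → ¬ AssouadBound F C d) :
    dimH {x : Euc 2 | AssouadBound (radialProj x '' F) C s} ≤ 1 := by
  classical
  obtain ⟨b, hb2, hgap⟩ : ∃ b : ℕ, 2 ≤ b ∧ Real.log 24 < (d - s) * Real.log b := by
    have : Tendsto (fun b : ℕ => (d - s) * Real.log b) atTop atTop :=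
      (Real.tendsto_log_atTop.comp tendsto_natCast_atTop_atTop).const_mul_atTop (sub_pos.2 hsd)
    exact ((eventually_ge_atTop 2).and (this.eventually_gt_atTop _)).exists
  have hb1 : (1 : ℝ) < b := by exact_mod_cast hb2
  have hseq : ∀ n : ℕ, ∃ z ∈ F, ∃ R, 0 < R ∧ R ≤ ((b : ℝ) ^ n)⁻¹ / (n + 1) ∧ ∃ S : Finset (Euc 2),
      (S : Set (Euc 2)) ⊆ F ∩ closedBall z R ∧ ((b : ℝ) ^ n) ^ d ≤ S.card ∧
        ∀ p ∈ S, ∀ q ∈ S, p ≠ q → R / (b : ℝ) ^ n < dist p q := by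
    intro n
    rcases Nat.eq_zero_or_pos n with rfl | hn
    · obtain ⟨z, hz⟩ := hne
      refine ⟨z, hz, 1, one_pos, by simp, {z}, by simpa using hz, by simp, ?_⟩
      intro p hp q hq hpq
      rw [Finset.mem_singleton] at hp hq
      exact absurd (hp.trans hq.symm) hpq
    · exact exists_separated_of_not_assouadBound
        (hbd.isCompact_closure.totallyBounded.subset subset_closure) (hs.trans hsd.le) hd
        (one_lt_pow₀ hb1 hn.ne') (by positivity)
  choose z hzF R hR hRle S hSF hScard hSsep using hseq
  set U : Ultrafilter ℕ := hyperfilter ℕ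
  have hU : (U : Filter ℕ) ≤ atTop := Nat.hyperfilter_le_atTop
  obtain ⟨z₀, -, hz₀⟩ := hbd.isCompact_closure.ultrafilter_le_nhds (U.map z)
    (by
      rw [le_principal_iff]
      exact Filter.mem_map.2 (Eventually.of_forall fun n => subset_closure (hzF n)))
  have hz : Tendsto z U (𝓝 z₀) := hz₀
  have hzi : ∀ i, Tendsto (fun n => z n i) U (𝓝 (z₀ i)) := fun i =>
    ((PiLp.continuous_apply 2 _ i).tendsto z₀).comp hz
  let P : ℕ → Finset (ℝ × ℝ) := fun n => (S n).image (rescale (z n) (R n))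
  have hRlim : Tendsto (fun n => 4 * R n * (b : ℝ) ^ n) U (𝓝 0) := by
    have h4 : Tendsto (fun n : ℕ => 4 / ((n : ℝ) + 1)) U (𝓝 0) :=
      ((tendsto_atTop_add_const_right _ 1 tendsto_natCast_atTop_atTop).const_div_atTop 4).mono_left
        hU
    refine squeeze_zero (fun n => by have := hR n; positivity) (fun n => ?_) h4
    have hbn : (0 : ℝ) < (b : ℝ) ^ n := by positivity
    calc 4 * R n * (b : ℝ) ^ n ≤ 4 * (((b : ℝ) ^ n)⁻¹ / (n + 1)) * (b : ℝ) ^ n := by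
          gcongr; exact hRle n
      _ = 4 / ((n : ℝ) + 1) := by field_simp
  have hhom : ∀ x : Euc 2, AssouadBound (radialProj x '' F) C s → x 1 ≠ z₀ 1 →
      ∃ m : ℕ, ∀ᶠ n in U, ProjHomogeneous b n (P n) (m + 1 : ℝ) s (projSlope (z n) x) := by
    intro x hx hx1
    have hpos : 0 < |z₀ 1 - x 1| := abs_pos.2 (sub_ne_zero.2 hx1.symm)
    set c := |z₀ 1 - x 1| / 2 with hc
    have hcp : 0 < c := by positivity
    obtain ⟨K, hK0, hK⟩ := projHomogeneous_of_assouadBound (M := ‖z₀ - x‖ + 1 + c) hx hC hcp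
      (by linarith [norm_nonneg (z₀ - x)])
    refine ⟨⌈K⌉₊, ?_⟩
    have e1 := hRlim.eventually_le_const (lt_min hcp one_pos)
    have e2 := (hz.sub_const x).norm.eventually_le_const (lt_add_one ‖z₀ - x‖)
    have e3 := ((hzi 1).sub_const (x 1)).abs.eventually_const_le (show c < _ from half_lt_self hpos)
    filter_upwards [e1, e2, e3] with n h1 h2 h3
    have hom := hK b n (z n) (R n) (P n) (by omega) (hR n) h1 (by linarith) h3 (fun p hp => by
      obtain ⟨X, hX, rfl⟩ := Finset.mem_image.1 hp
      exact ⟨X, (hSF n hX).1, (hSF n hX).2, rfl⟩)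
    intro t ρ ρ' hρ' hρ
    obtain ⟨T, hT1, hT2⟩ := hom t ρ ρ' hρ' hρ
    have hρ0 : 0 < ρ' := lt_of_lt_of_le (by positivity) hρ'
    have hdiv : 0 ≤ ρ / ρ' := div_nonneg (hρ0.le.trans hρ) hρ0.le
    refine ⟨T, hT1, hT2.trans ?_⟩
    gcongr
    linarith [Nat.le_ceil K]
  let G : ℕ → Set (Euc 2) := fun m => {x | x 1 ≠ z₀ 1 ∧
    ∀ᶠ n in U, ProjHomogeneous b n (P n) (m + 1 : ℝ) s (projSlope (z n) x)}
  have hcount : ∀ m, (projSlope z₀ '' G m).Countable := by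
    intro m
    rw [image_eq_range]
    refine countable_range_of_projHomogeneous (ι := G m) (P := P) (C := m + 1) (s := s) (d := d)
      (ε := fun n x => projSlope (z n) x) hU hb2 (by positivity) hs1 hgap ?_ ?_ ?_ ?_
      fun x => x.2.2
    · intro n p hp
      obtain ⟨X, hX, rfl⟩ := Finset.mem_image.1 hp
      exact rescale_mem (hR n) (hSF n hX).2
    · intro n p hp q hq hpq
      obtain ⟨X, hX, rfl⟩ := Finset.mem_image.1 hp
      obtain ⟨Y, hY, rfl⟩ := Finset.mem_image.1 hq
      exact rescale_separated (hR n) (by positivity)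
        (hSsep n X hX Y hY fun hXY => hpq (by rw [hXY]))
    · intro n
      rw [Finset.card_image_of_injective _ (rescale_injective (z n) (hR n))]
      exact hScard n
    · rintro ⟨x, hx, -⟩
      exact (((hzi 0).sub_const (x 0)).neg).div ((hzi 1).sub_const (x 1))
        (sub_ne_zero.2 (Ne.symm hx))
  have hsub : {x : Euc 2 | AssouadBound (radialProj x '' F) C s} ⊆ {x : Euc 2 | x 1 = z₀ 1} ∪
      ⋃ m, ⋃ t ∈ projSlope z₀ '' G m, {x : Euc 2 | x 1 ≠ z₀ 1 ∧ projSlope z₀ x = t} := by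
    intro x hx
    by_cases hx1 : x 1 = z₀ 1
    · exact Or.inl hx1
    · obtain ⟨m, hm⟩ := hhom x hx hx1
      exact Or.inr (mem_iUnion.2 ⟨m, mem_iUnion₂.2 ⟨_, ⟨x, ⟨hx1, hm⟩, rfl⟩, hx1, rfl⟩⟩)
  refine (dimH_mono hsub).trans ?_
  rw [dimH_union, dimH_iUnion]
  refine max_le (dimH_vertical_le z₀) (iSup_le fun m => ?_)
  rw [dimH_bUnion (hcount m)]
  exact iSup₂_le fun t _ => dimH_slope_le z₀ t

theorem isBounded_image_radialProj (x : Euc 2) (F : Set (Euc 2)) :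
    Bornology.IsBounded (radialProj x '' F) := by
  refine (isBounded_closedBall (x := x) (r := 1)).subset ?_
  rintro _ ⟨X, -, rfl⟩
  by_cases h : X = x
  · simp [radialProj, h]
  · have : ‖X - x‖ ≠ 0 := norm_ne_zero_iff.2 (sub_ne_zero.2 h)
    rw [radialProj_of_ne h, mem_closedBall, dist_eq_norm, add_sub_cancel_right, norm_smul, norm_inv,
      norm_norm, inv_mul_cancel₀ this]

/-- **Corollary 3.9**: for non-empty bounded `F ⊆ ℝ²`,
`dim_A π_x(F) ≥ min{dim_A F, 1}` for all `x ∈ ℝ²` outside a set of exceptions of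
Hausdorff dimension at most `1`. -/
theorem assouad_radial_projection_planar (F : Set (Euc 2)) (hne : F.Nonempty)
    (hbd : Bornology.IsBounded F) :
    dimH {x : Euc 2 | ¬ min (assouadDim F) 1 ≤ assouadDim (radialProj x '' F)} ≤ 1 := by
  have hsub : {x : Euc 2 | ¬ min (assouadDim F) 1 ≤ assouadDim (radialProj x '' F)} ⊆
      ⋃ s ∈ {s : ℚ | 0 ≤ (s : ℝ) ∧ (s : ℝ) < 1 ∧ (s : ℝ) < assouadDim F}, ⋃ C : ℕ,
        {x : Euc 2 | AssouadBound (radialProj x '' F) C s} := by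
    intro x hx
    obtain ⟨C₅, hC₅, h₅⟩ := exists_assouadBound_of_isBounded (isBounded_image_radialProj x F)
    obtain ⟨α, ⟨hα0, C, hC, hα⟩, hlt⟩ := exists_lt_of_csInf_lt
      (by exact ⟨5, by norm_num, C₅, hC₅, h₅⟩)
      (not_le.1 hx)
    obtain ⟨s, hs1, hs2⟩ := exists_rat_btwn hlt
    have hα' : AssouadBound (radialProj x '' F) C α := hα
    refine mem_iUnion₂.2 ⟨s, ⟨hα0.trans hs1.le, (lt_min_iff.1 hs2).2, (lt_min_iff.1 hs2).1⟩,
      mem_iUnion.2 ⟨⌈C⌉₊, hα'.mono (Nat.le_ceil C) (by positivity) hs1.le⟩⟩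
  refine (dimH_mono hsub).trans ?_
  rw [dimH_bUnion (Set.to_countable _)]
  refine iSup₂_le fun s hs => ?_
  obtain ⟨hs0, hs1, hsF⟩ := hs
  rw [dimH_iUnion]
  refine iSup_le fun C => ?_
  obtain ⟨d, hsd, hdF⟩ := exists_between hsF
  refine dimH_assouadBound_radialProj_le hne hbd (Nat.cast_nonneg C) hs0 hs1 hsd fun C' hC' hB => ?_
  exact notMem_of_lt_csInf hdF ⟨0, fun α hα => hα.1⟩ ⟨hs0.trans hsd.le, C', hC', hB⟩

end
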